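/- For the K-user binary-input covert MAC, the covert capacity region (the closure of the set of achievable covert throughput tuples) equals the union, over all ρ ∈ [0,1]^K with Σ_{k=1}^K ρ_k = 1, of the sets { r ∈ ℝ^K : 0 ≤ r_k ≤ √(2/χ(ρ)) · ρ_k · D(P_k‖P_∅) for every k ∈ {1,…,K} }, where χ(ρ) := Σ_z (Σ_k ρ_k(Q_k(z) − Q_∅(z)))² / Q_∅(z). -/

import Mathlib

open Finset Filter
open scoped Topology Classical

noncomputable section

/-- `P` is a probability distribution on the finite type `Z`. -/
def IsDist {Z : Type*} [Fintype Z] (P : Z → ℝ) : Prop :=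
  (∀ z, 0 ≤ P z) ∧ ∑ z, P z = 1

/-- Kullback–Leibler divergence `D(P‖Q)` (natural logarithm). -/
def klDiv {Z : Type*} [Fintype Z] (P Q : Z → ℝ) : ℝ :=
  ∑ z, P z * Real.log (P z / Q z)

/-- `P` is absolutely continuous w.r.t. `Q`. -/
def AbsCont {Z : Type*} (P Q : Z → ℝ) : Prop :=
  ∀ z, Q z = 0 → P z = 0

/-- The binary input vector having ones exactly at the indices in `U`. -/
def xU {K : ℕ} (U : Finset (Fin K)) : Fin K → Bool :=
  fun k => decide (k ∈ U)

/-- Bernoulli distribution on `Bool` with success probability `p`. -/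
def bern (p : ℝ) : Bool → ℝ := fun b => if b then p else 1 - p

/-- `n`-fold memoryless extension of a channel `W`. -/
def prodChannel {A Z : Type*} (W : A → Z → ℝ) (n : ℕ)
    (x : Fin n → A) (z : Fin n → Z) : ℝ :=
  ∏ j, W (x j) (z j)

/-- `χ(ρ) := Σ_z (Σ_k ρ_k (Q_k(z) - Q_∅(z)))² / Q_∅(z)` for the warden channel `Wz`. -/
def chiRho {K : ℕ} {Z : Type*} [Fintype Z] (Wz : (Fin K → Bool) → Z → ℝ)
    (ρ : Fin K → ℝ) : ℝ :=
  ∑ z, (∑ k, ρ k * (Wz (xU {k}) z - Wz (xU ∅) z)) ^ 2 / Wz (xU ∅) z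

/-- The distribution `Q̂ⁿ` induced at the warden by a code with encoders `enc`, uniform
messages and uniform keys. -/
def Qhat {K n : ℕ} {Z : Type*} [Fintype Z] (Wz : (Fin K → Bool) → Z → ℝ)
    (M L : Fin K → ℕ) (enc : ∀ k, Fin (M k) × Fin (L k) → Fin n → Bool)
    (z : Fin n → Z) : ℝ :=
  (∏ k, ((M k : ℝ) * (L k : ℝ)))⁻¹ *
    ∑ m : ∀ k, Fin (M k), ∑ l : ∀ k, Fin (L k),
      prodChannel Wz n (fun j k => enc k (m k, l k) j) z

/-- The average probability of decoding error of a code over the `n`-fold extension of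
the channel `Wy`, with uniform messages and uniform keys. -/
def Pe {K n : ℕ} {Y : Type*} [Fintype Y] (Wy : (Fin K → Bool) → Y → ℝ)
    (M L : Fin K → ℕ) (enc : ∀ k, Fin (M k) × Fin (L k) → Fin n → Bool)
    (dec : (Fin n → Y) → (∀ k, Fin (L k)) → ∀ k, Fin (M k)) : ℝ :=
  (∏ k, ((M k : ℝ) * (L k : ℝ)))⁻¹ *
    ∑ m : ∀ k, Fin (M k), ∑ l : ∀ k, Fin (L k), ∑ y : Fin n → Y,
      prodChannel Wy n (fun j k => enc k (m k, l k) j) y *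
        (if dec y l = m then 0 else 1)

/-- `δₙ = D(Q̂ⁿ ‖ Q_∅^{⊗n})`. -/
def deltaN {K n : ℕ} {Z : Type*} [Fintype Z] (Wz : (Fin K → Bool) → Z → ℝ)
    (M L : Fin K → ℕ) (enc : ∀ k, Fin (M k) × Fin (L k) → Fin n → Bool) : ℝ :=
  klDiv (Qhat Wz M L enc) (fun z : Fin n → Z => ∏ j, Wz (xU ∅) (z j))

/-!
Suppose that in one channel use user `k` sends a one with small probability `p_k`, and write
`p = s ρ` with `s = ∑ p_k`. Two users rarely collide, so up to `O(s²)` every output law is affine in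
`p`: the warden's divergence per letter is `χ(p) / 2 = s² χ(ρ) / 2` to leading order, while user `k`
can convey about `p_k D(P_k‖P_∅) = s ρ_k D(P_k‖P_∅)` nats. The sparsity `s` cancels in the ratio
`log M_k / √(n δ_n)`, which leaves the corner of the box of `ρ`.

In the converse, superadditivity and convexity of the divergence reduce the warden to one letter.
Covertness forces all `p_k` to vanish because `Q_∅` is not a mixture of the other `Q_U`, and a
Donsker–Varadhan form of Fano's inequality, comparing with the channel in which user `k` is
disconnected, bounds `log M_k`.

For achievability the keys, which are not rationed, specify a random i.i.d. codebook, so that the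
warden's output is exactly i.i.d. Taking `p_k ≈ ρ_k w / n` with `w → ∞` and `w = o(√n)`, the
receiver decodes each user separately by thresholding a likelihood ratio that pretends the other
users are silent.
-/

open scoped BigOperators

/-! ### Averages over product spaces -/

section Averages

variable {ι : Type*} [Fintype ι] [DecidableEq ι] {Ω Ω' : ι → Type*} [∀ i, Fintype (Ω i)]
  [∀ i, Fintype (Ω' i)]

lemma expect_pi_update (k : ι) [Nonempty (Ω k)] (F : (∀ i, Ω i) → ℝ) :
    𝔼 ω, 𝔼 a, F (Function.update ω k a) = 𝔼 ω, F ω := by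
  let e := Equiv.piSplitAt k Ω
  have hsplit (G : (∀ i, Ω i) → ℝ) : 𝔼 ω, G ω = 𝔼 b, 𝔼 w, G (e.symm (b, w)) := by
    rw [Fintype.expect_equiv e G (fun p => G (e.symm p)) fun ω => by simp, ← univ_product_univ,
      expect_product]
  have hupdate (a b : Ω k) w : Function.update (e.symm (b, w)) k a = e.symm (a, w) := by
    ext i
    by_cases h : i = k
    · subst h; simp [e]
    · simp [e, h]
  calc 𝔼 ω, 𝔼 a, F (Function.update ω k a)
      = 𝔼 _b : Ω k, 𝔼 w, 𝔼 a, F (e.symm (a, w)) := by simp only [hsplit, hupdate]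
    _ = 𝔼 w, 𝔼 a, F (e.symm (a, w)) := Fintype.expect_const _
    _ = 𝔼 ω, F ω := by rw [hsplit F, expect_comm]

lemma expect_pi_eval [∀ i, Nonempty (Ω i)] (k : ι) (f : Ω k → ℝ) :
    𝔼 ω : ∀ i, Ω i, f (ω k) = 𝔼 a, f a := by
  rw [← expect_pi_update k]
  simp only [Function.update_self, Fintype.expect_const]

lemma expect_pi_eval_pair [∀ i, Nonempty (Ω i)] {k l : ι} (hkl : k ≠ l) (f : Ω k → Ω l → ℝ) :
    𝔼 ω : ∀ i, Ω i, f (ω k) (ω l) = 𝔼 a, 𝔼 b, f a b := by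
  rw [← expect_pi_update l]
  simp only [Function.update_self, Function.update_of_ne hkl]
  exact expect_pi_eval k fun a => 𝔼 b, f a b

lemma expect_pi_prod (f : ∀ i, Ω i → ℝ) :
    𝔼 ω : ∀ i, Ω i, ∏ i, f i (ω i) = ∏ i, 𝔼 a, f i a := by
  simp only [Fintype.expect_eq_sum_div_card, prod_div_distrib, Fintype.card_pi, Nat.cast_prod,
    prod_univ_sum, Fintype.piFinset_univ]

lemma expect_pi_map {π : ∀ i, Ω i → Ω' i} (hπ : ∀ i (f : Ω' i → ℝ), 𝔼 a, f (π i a) = 𝔼 b, f b)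
    (G : (∀ i, Ω' i) → ℝ) :
    𝔼 ω : ∀ i, Ω i, G (fun i => π i (ω i)) = 𝔼 e, G e := by
  have hind (e e' : ∀ i, Ω' i) :
      (∏ i, if e i = e' i then (1 : ℝ) else 0) = if e = e' then 1 else 0 := by
    simp only [prod_boole, mem_univ, forall_const, funext_iff]
  have hexpand (e : ∀ i, Ω' i) : G e = ∑ e', G e' * ∏ i, if e i = e' i then (1 : ℝ) else 0 := by
    simp only [hind, mul_ite, mul_one, mul_zero, sum_ite_eq, mem_univ, if_true]
  rw [expect_congr rfl fun ω _ => hexpand fun i => π i (ω i), expect_congr rfl fun e _ => hexpand e,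
    expect_sum_comm, expect_sum_comm]
  refine sum_congr rfl fun e' _ => ?_
  rw [← mul_expect, ← mul_expect, expect_pi_prod fun i a => if π i a = e' i then (1 : ℝ) else 0,
    expect_pi_prod fun i b => if b = e' i then (1 : ℝ) else 0]
  simp only [hπ _ fun b => if b = e' _ then (1 : ℝ) else 0]

lemma expect_pi_prodMk (F : (∀ i, Ω i × Ω' i) → ℝ) :
    𝔼 ω, F ω = 𝔼 m : ∀ i, Ω i, 𝔼 l : ∀ i, Ω' i, F fun i => (m i, l i) := by
  rw [← expect_product' univ univ fun (m : ∀ i, Ω i) (l : ∀ i, Ω' i) => F fun i => (m i, l i),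
    univ_product_univ]
  exact Fintype.expect_equiv
    { toFun ω := (fun i => (ω i).1, fun i => (ω i).2), invFun p i := (p.1 i, p.2 i) } _ _
    fun _ => rfl

end Averages

/-! ### Distributions and relative entropy -/

section Distributions

variable {Z ι Ω : Type*} [Fintype ι] [Fintype Ω]

lemma AbsCont.expect {P : Ω → Z → ℝ} {Q : Z → ℝ} (hP : ∀ ω, AbsCont (P ω) Q) :
    AbsCont (fun z => 𝔼 ω, P ω z) Q :=
  fun z hz => expect_eq_zero fun ω _ => hP ω z hz

lemma AbsCont.pi {P Q : ι → Z → ℝ} (hPQ : ∀ i, AbsCont (P i) (Q i)) :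
    AbsCont (fun z : ι → Z => ∏ i, P i (z i)) fun z => ∏ i, Q i (z i) := fun z hz => by
  obtain ⟨i, hi, h⟩ := prod_eq_zero_iff.mp hz
  exact prod_eq_zero hi (hPQ i _ h)

variable [Fintype Z]

lemma IsDist.le_one {P : Z → ℝ} (hP : IsDist P) (z : Z) : P z ≤ 1 :=
  hP.2 ▸ single_le_sum (fun w _ => hP.1 w) (mem_univ z)

lemma IsDist.sum_mul_const {P : Z → ℝ} (hP : IsDist P) (c : ℝ) : ∑ z, P z * c = c := by
  rw [← Finset.sum_mul, hP.2, one_mul]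

lemma IsDist.expect [Nonempty Ω] {P : Ω → Z → ℝ} (hP : ∀ ω, IsDist (P ω)) :
    IsDist fun z => 𝔼 ω, P ω z := by
  refine ⟨fun z => expect_nonneg fun ω _ => (hP ω).1 z, ?_⟩
  rw [← expect_sum_comm, expect_congr rfl fun ω _ => (hP ω).2, Fintype.expect_const]

lemma IsDist.pi [DecidableEq ι] {P : ι → Z → ℝ} (hP : ∀ i, IsDist (P i)) :
    IsDist fun z : ι → Z => ∏ i, P i (z i) := by
  refine ⟨fun z => prod_nonneg fun i _ => (hP i).1 _, ?_⟩
  rw [← Fintype.piFinset_univ, ← prod_univ_sum]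
  exact prod_eq_one fun i _ => (hP i).2

lemma IsDist.sum_mul {V : ι → Z → ℝ} (hV : ∀ i, IsDist (V i)) {w : ι → ℝ}
    (hw : w ∈ stdSimplex ℝ ι) : IsDist fun z => ∑ i, w i * V i z := by
  refine ⟨fun z => sum_nonneg fun i _ => mul_nonneg (hw.1 i) ((hV i).1 z), ?_⟩
  rw [sum_comm]
  simp only [← mul_sum, (hV _).2, mul_one, hw.2]

end Distributions

section RelativeEntropy

variable {Z ι : Type*} [Fintype Z] [Fintype ι]

lemma klDiv_eq_sum_klFun {P Q : Z → ℝ} (hP : ∑ z, P z = 1) (hQ : ∑ z, Q z = 1)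
    (hPQ : AbsCont P Q) :
    klDiv P Q = ∑ z, Q z * InformationTheory.klFun (P z / Q z) := by
  have hpoint z : Q z * InformationTheory.klFun (P z / Q z)
      = P z * Real.log (P z / Q z) + Q z - P z := by
    rcases eq_or_ne (Q z) 0 with hz | hz
    · simp [hz, hPQ z hz]
    · rw [InformationTheory.klFun_apply]
      field_simp
  simp only [hpoint, sum_sub_distrib, sum_add_distrib, hP, hQ, klDiv, add_sub_cancel_right]

lemma klDiv_nonneg {P Q : Z → ℝ} (hP : IsDist P) (hQ : IsDist Q) (hPQ : AbsCont P Q) :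
    0 ≤ klDiv P Q := by
  rw [klDiv_eq_sum_klFun hP.2 hQ.2 hPQ]
  exact sum_nonneg fun z _ => mul_nonneg (hQ.1 z)
    (InformationTheory.klFun_nonneg (div_nonneg (hP.1 z) (hQ.1 z)))

lemma eq_of_klDiv_nonpos {P Q : Z → ℝ} (hP : IsDist P) (hQ : IsDist Q) (hPQ : AbsCont P Q)
    (h : klDiv P Q ≤ 0) : P = Q := by
  have hfun z : 0 ≤ InformationTheory.klFun (P z / Q z) :=
    InformationTheory.klFun_nonneg (div_nonneg (hP.1 z) (hQ.1 z))
  have hzero : ∑ z, Q z * InformationTheory.klFun (P z / Q z) = 0 :=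
    klDiv_eq_sum_klFun hP.2 hQ.2 hPQ ▸ h.antisymm (klDiv_nonneg hP hQ hPQ)
  rw [sum_eq_zero_iff_of_nonneg fun z _ => mul_nonneg (hQ.1 z) (hfun z)] at hzero
  funext z
  rcases eq_or_ne (Q z) 0 with hz | hz
  · rw [hz, hPQ z hz]
  · have := (mul_eq_zero.mp (hzero z (mem_univ z))).resolve_left hz
    rwa [InformationTheory.klFun_eq_zero_iff (div_nonneg (hP.1 z) (hQ.1 z)),
      div_eq_one_iff_eq hz] at this

lemma klDiv_le_neg_log {P Q : Z → ℝ} {c : ℝ} (hP : IsDist P) (hc : 0 < c)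
    (h : ∀ z, c * P z ≤ Q z) : klDiv P Q ≤ -Real.log c := by
  calc klDiv P Q ≤ ∑ z, P z * -Real.log c := sum_le_sum fun z _ => ?_
    _ = -Real.log c := by rw [← sum_mul, hP.2, one_mul]
  rcases (hP.1 z).eq_or_lt with hz | hz
  · simp [← hz]
  · have hQ : 0 < Q z := (mul_pos hc hz).trans_le (h z)
    rw [← Real.log_inv]
    refine mul_le_mul_of_nonneg_left (Real.log_le_log (div_pos hz hQ) ?_) hz.le
    rw [div_le_iff₀ hQ, ← div_eq_inv_mul, le_div_iff₀ hc, mul_comm]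
    exact h z

/-- The Donsker–Varadhan inequality, linearised by `log x ≤ x - 1` so that `Q` need not be
normalised. -/
lemma sum_mul_log_le_klDiv {P Q G : Z → ℝ} (hP : IsDist P) (hPQ : AbsCont P Q)
    (hQ : ∀ z, 0 ≤ Q z) (hG : ∀ z, 0 ≤ G z) (hpos : ∀ z, P z ≠ 0 → G z ≠ 0) :
    ∑ z, P z * Real.log (G z) ≤ klDiv P Q + ∑ z, Q z * G z - 1 := by
  rw [← hP.2, klDiv, ← sum_add_distrib, ← sum_sub_distrib]
  refine sum_le_sum fun z _ => ?_
  rcases (hP.1 z).eq_or_lt with hz | hz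
  · simpa [← hz] using mul_nonneg (hQ z) (hG z)
  · have hQz : 0 < Q z := (hQ z).lt_of_ne' fun h => hz.ne' (hPQ z h)
    have hGz : 0 < G z := (hG z).lt_of_ne' (hpos z hz.ne')
    have hlog := Real.log_le_sub_one_of_pos (div_pos (mul_pos hQz hGz) hz)
    rw [Real.log_div (mul_pos hQz hGz).ne' hz.ne', Real.log_mul hQz.ne' hGz.ne'] at hlog
    rw [Real.log_div hz.ne' hQz.ne']
    have hscaled := mul_le_mul_of_nonneg_left hlog hz.le
    rw [mul_sub (P z) (_ / _), mul_div_cancel₀ _ hz.ne'] at hscaled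
    linarith

lemma klDiv_expect_le [Nonempty ι] {P : ι → Z → ℝ} {Q : Z → ℝ} (hP : ∀ i, IsDist (P i))
    (hQ : ∀ z, 0 ≤ Q z) (hPQ : ∀ i, AbsCont (P i) Q) :
    klDiv (fun z => 𝔼 i, P i z) Q ≤ 𝔼 i, klDiv (P i) Q := by
  let R : Z → ℝ := fun z => 𝔼 i, P i z
  have hRdist : IsDist R := IsDist.expect hP
  have hmass : ∑ z, Q z * (R z / Q z) = 1 := by
    rw [← hRdist.2]
    exact sum_congr rfl fun z _ => mul_div_cancel_of_imp' fun hz => AbsCont.expect hPQ z hz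
  have hRpos i z (hz : P i z ≠ 0) : 0 < R z :=
    expect_pos' (fun j _ => (hP j).1 z) ⟨i, mem_univ i, ((hP i).1 z).lt_of_ne' hz⟩
  calc klDiv R Q = 𝔼 i, ∑ z, P i z * Real.log (R z / Q z) := by
        rw [expect_sum_comm]
        exact sum_congr rfl fun z _ => expect_mul _ _ _
    _ ≤ 𝔼 i, klDiv (P i) Q := expect_le_expect fun i _ => by
        have hDV := sum_mul_log_le_klDiv (hP i) (hPQ i) hQ
          (fun z => div_nonneg (hRdist.1 z) (hQ z))
          fun z hz => (div_pos (hRpos i z hz) ((hQ z).lt_of_ne' fun h => hz (hPQ i z h))).ne'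
        linarith

variable [DecidableEq ι]

/-- The law of the `j`-th coordinate under the distribution `P` on `ι → Z`. -/
def marginal (P : (ι → Z) → ℝ) (j : ι) (a : Z) : ℝ :=
  ∑ z, if z j = a then P z else 0

lemma sum_marginal_mul (P : (ι → Z) → ℝ) (j : ι) (f : Z → ℝ) :
    ∑ a, marginal P j a * f a = ∑ z, P z * f (z j) := by
  simp only [marginal, sum_mul, ite_mul, zero_mul]
  rw [sum_comm]
  simp only [sum_ite_eq, mem_univ, if_true]

lemma IsDist.marginal {P : (ι → Z) → ℝ} (hP : IsDist P) (j : ι) : IsDist (marginal P j) := by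
  refine ⟨fun a => sum_nonneg fun z _ => ?_, ?_⟩
  · split_ifs
    exacts [hP.1 z, le_rfl]
  · simpa only [mul_one, hP.2] using sum_marginal_mul P j fun _ => 1

lemma marginal_apply_ne_zero {P : (ι → Z) → ℝ} (hP : ∀ z, 0 ≤ P z) {z : ι → Z} (hz : P z ≠ 0)
    (j : ι) : marginal P j (z j) ≠ 0 := by
  refine (sum_pos' (fun w _ => ?_) ⟨z, mem_univ z, ?_⟩).ne'
  · split_ifs
    exacts [hP w, le_rfl]
  · simpa using (hP z).lt_of_ne' hz

lemma marginal_pi {P : ι → Z → ℝ} (hP : ∀ i, IsDist (P i)) (j : ι) :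
    marginal (fun z => ∏ i, P i (z i)) j = P j := by
  funext a
  have hfactor (z : ι → Z) : (if z j = a then ∏ i, P i (z i) else 0)
      = ∏ i, if i = j ∧ z i ≠ a then 0 else P i (z i) := by
    split_ifs with h
    · refine prod_congr rfl fun i _ => (if_neg ?_).symm
      rintro ⟨rfl, hne⟩
      exact hne h
    · exact (prod_eq_zero (mem_univ j) (by simp [h])).symm
  have hsum := prod_univ_sum (fun _ : ι => (univ : Finset Z))
    fun i b => if i = j ∧ b ≠ a then 0 else P i b
  rw [Fintype.piFinset_univ] at hsum
  simp only [marginal, hfactor, ← hsum]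
  rw [prod_eq_single j (fun i _ hi => by simp only [hi, false_and, if_false, (hP i).2])
    fun h => absurd (mem_univ j) h]
  simp only [true_and, ite_not, sum_ite_eq', mem_univ, if_true]

lemma sum_klDiv_marginal_le {P : (ι → Z) → ℝ} {Q : ι → Z → ℝ} (hP : IsDist P)
    (hQ : ∀ i z, 0 ≤ Q i z) (hPQ : AbsCont P fun z => ∏ i, Q i (z i)) :
    ∑ j, klDiv (marginal P j) (Q j) ≤ klDiv P fun z => ∏ i, Q i (z i) := by
  set G : (ι → Z) → ℝ := fun z => ∏ j, marginal P j (z j) / Q j (z j) with hG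
  have hQne {z : ι → Z} (hz : P z ≠ 0) j : Q j (z j) ≠ 0 := fun h =>
    hz (hPQ z (prod_eq_zero (mem_univ j) h))
  have hfactor {z : ι → Z} (hz : P z ≠ 0) j : marginal P j (z j) / Q j (z j) ≠ 0 :=
    div_ne_zero (marginal_apply_ne_zero hP.1 hz j) (hQne hz j)
  have hlog : ∑ z, P z * Real.log (G z) = ∑ j, klDiv (marginal P j) (Q j) := by
    simp only [klDiv, sum_marginal_mul]
    rw [sum_comm]
    refine sum_congr rfl fun z _ => ?_
    rcases eq_or_ne (P z) 0 with hz | hz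
    · simp [hz]
    · rw [hG, Real.log_prod fun j _ => hfactor hz j, mul_sum]
  have hmass : ∑ z, (∏ i, Q i (z i)) * G z ≤ 1 := by
    have hle : ∀ z, (∏ i, Q i (z i)) * G z ≤ ∏ j, marginal P j (z j) := fun z => by
      rw [hG, ← prod_mul_distrib]
      refine prod_le_prod
        (fun j _ => mul_nonneg (hQ j _) (div_nonneg ((hP.marginal j).1 _) (hQ j _))) fun j _ => ?_
      rcases eq_or_ne (Q j (z j)) 0 with h | h
      · simpa [h] using (hP.marginal j).1 _
      · exact (mul_div_cancel₀ _ h).le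
    exact (sum_le_sum fun z _ => hle z).trans (IsDist.pi hP.marginal).2.le
  have hDV := sum_mul_log_le_klDiv (G := G) hP hPQ (fun z => prod_nonneg fun i _ => hQ i _)
    (fun z => prod_nonneg fun j _ => div_nonneg ((hP.marginal j).1 _) (hQ j _))
    fun z hz => prod_ne_zero_iff.mpr fun j _ => hfactor hz j
  linarith

lemma klDiv_pi {P Q : ι → Z → ℝ} (hP : ∀ i, IsDist (P i)) (hPQ : ∀ i, AbsCont (P i) (Q i)) :
    klDiv (fun z : ι → Z => ∏ i, P i (z i)) (fun z => ∏ i, Q i (z i))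
      = ∑ i, klDiv (P i) (Q i) := by
  have hsingle i : klDiv (P i) (Q i)
      = ∑ z : ι → Z, (∏ j, P j (z j)) * Real.log (P i (z i) / Q i (z i)) := by
    rw [← sum_marginal_mul (fun z : ι → Z => ∏ j, P j (z j)) i fun a => Real.log (P i a / Q i a),
      marginal_pi hP, klDiv]
  rw [sum_congr rfl fun i _ => hsingle i, klDiv, sum_comm]
  refine sum_congr rfl fun z _ => ?_
  rw [← mul_sum]
  rcases eq_or_ne (∏ j, P j (z j)) 0 with hz | hz
  · simp only [hz, zero_mul]
  · have hPz j : P j (z j) ≠ 0 := prod_ne_zero_iff.mp hz j (mem_univ j)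
    rw [← prod_div_distrib, Real.log_prod fun j _ => div_ne_zero (hPz j) fun h => hPz j (hPQ j _ h)]

end RelativeEntropy

section SecondOrder

lemma abs_klFun_one_add_sub_le {t : ℝ} (ht : |t| ≤ 1 / 2) :
    |InformationTheory.klFun (1 + t) - t ^ 2 / 2| ≤ 4 * |t| ^ 3 := by
  obtain ⟨hlow, hhigh⟩ := abs_le.mp ht
  have hlog : |Real.log (1 + t) - t + t ^ 2 / 2| ≤ 2 * |t| ^ 3 := by
    have h := Real.abs_log_sub_add_sum_range_le (x := -t) (by rw [abs_neg]; linarith) 2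
    rw [abs_neg, sub_neg_eq_add] at h
    calc |Real.log (1 + t) - t + t ^ 2 / 2|
        = |∑ i ∈ range 2, (-t) ^ (i + 1) / (i + 1) + Real.log (1 + t)| := by
          congr 1
          simp only [sum_range_succ, range_zero, sum_empty]
          push_cast
          ring
      _ ≤ |t| ^ (2 + 1) / (1 - |t|) := h
      _ ≤ |t| ^ 3 / (1 / 2) := by gcongr; linarith
      _ = 2 * |t| ^ 3 := by ring
  calc |InformationTheory.klFun (1 + t) - t ^ 2 / 2|
      = |(1 + t) * (Real.log (1 + t) - t + t ^ 2 / 2) - t ^ 3 / 2| := by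
        rw [InformationTheory.klFun_apply]
        congr 1
        ring
    _ ≤ |1 + t| * |Real.log (1 + t) - t + t ^ 2 / 2| + |t| ^ 3 / 2 := by
        refine (abs_sub _ _).trans_eq ?_
        rw [abs_mul, abs_div, abs_pow, abs_two]
    _ ≤ 3 / 2 * (2 * |t| ^ 3) + |t| ^ 3 / 2 := by
        gcongr
        exact abs_le.mpr ⟨by linarith, by linarith⟩
    _ ≤ 4 * |t| ^ 3 := by linarith [pow_nonneg (abs_nonneg t) 3]

variable {α Z : Type*} [Fintype Z] {l : Filter α} {s : α → ℝ}

lemma tendsto_klFun_one_add_mul_div_sq {u : α → ℝ} {a : ℝ} (hs : Tendsto s l (𝓝 0))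
    (hs0 : ∀ᶠ i in l, s i ≠ 0) (hu : Tendsto u l (𝓝 a)) :
    Tendsto (fun i => InformationTheory.klFun (1 + s i * u i) / s i ^ 2) l (𝓝 (a ^ 2 / 2)) := by
  have hsu : Tendsto (fun i => |s i * u i|) l (𝓝 0) := by simpa using (hs.mul hu).abs
  have hmain : Tendsto (fun i => u i ^ 2 / 2) l (𝓝 (a ^ 2 / 2)) := (hu.pow 2).div_const 2
  have herr : Tendsto (fun i => 4 * |s i| * |u i| ^ 3) l (𝓝 0) := by
    simpa using (hs.abs.const_mul 4).mul (hu.abs.pow 3)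
  refine (hmain.add (squeeze_zero_norm' ?_ herr)).congr (f₁ := fun i => u i ^ 2 / 2 +
    (InformationTheory.klFun (1 + s i * u i) / s i ^ 2 - u i ^ 2 / 2)) (fun i => by ring) |>.trans
    (by rw [add_zero])
  filter_upwards [hs0, hsu.eventually_le_const (by norm_num : (0 : ℝ) < 1 / 2)] with i hi hsmall
  have hsq : 0 < s i ^ 2 := by positivity
  calc ‖InformationTheory.klFun (1 + s i * u i) / s i ^ 2 - u i ^ 2 / 2‖
      = |InformationTheory.klFun (1 + s i * u i) - (s i * u i) ^ 2 / 2| / s i ^ 2 := by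
        rw [Real.norm_eq_abs, ← abs_of_pos hsq, ← abs_div, abs_of_pos hsq]
        congr 1
        field_simp
    _ ≤ 4 * |s i * u i| ^ 3 / s i ^ 2 := by gcongr; exact abs_klFun_one_add_sub_le hsmall
    _ = 4 * |s i| * |u i| ^ 3 := by
        rw [abs_mul, ← sq_abs (s i)]
        field_simp

lemma tendsto_klDiv_div_sq {R : α → Z → ℝ} {Q g : Z → ℝ} (hR : ∀ i, ∑ z, R i z = 1)
    (hQ : ∑ z, Q z = 1) (hRQ : ∀ i, AbsCont (R i) Q) (hs : Tendsto s l (𝓝 0))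
    (hs0 : ∀ᶠ i in l, s i ≠ 0) (hg : ∀ z, Tendsto (fun i => (R i z - Q z) / s i) l (𝓝 (g z))) :
    Tendsto (fun i => klDiv (R i) Q / s i ^ 2) l (𝓝 ((∑ z, g z ^ 2 / Q z) / 2)) := by
  simp only [fun i => klDiv_eq_sum_klFun (hR i) hQ (hRQ i), sum_div]
  refine tendsto_finsetSum _ fun z _ => ?_
  rcases eq_or_ne (Q z) 0 with hz | hz
  · simpa [hz] using tendsto_const_nhds
  · have hlim := (tendsto_klFun_one_add_mul_div_sq hs hs0 ((hg z).div_const (Q z))).const_mul (Q z)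
    rw [show g z ^ 2 / Q z / 2 = Q z * ((g z / Q z) ^ 2 / 2) by field_simp]
    refine hlim.congr' ?_
    filter_upwards [hs0] with i hi
    rw [show 1 + s i * ((R i z - Q z) / s i / Q z) = R i z / Q z by field_simp; ring, mul_div_assoc]

end SecondOrder

section Mixtures

variable {T Z : Type*} [Fintype T] {V : T → Z → ℝ} {t₀ : T}

/-- `V t₀` is a convex combination of the other distributions of the family `V`. -/
def IsMixtureOfOthers (V : T → Z → ℝ) (t₀ : T) : Prop :=
  ∃ lam : T → ℝ, (∀ t, 0 ≤ lam t) ∧ lam t₀ = 0 ∧ (∑ t, lam t) = 1 ∧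
    ∀ z, V t₀ z = ∑ t, lam t * V t z

lemma isMixtureOfOthers_of_sum_mul_eq {p : T → ℝ} (hp : p ∈ stdSimplex ℝ T) (hp₀ : p t₀ < 1)
    (h : ∀ z, ∑ t, p t * V t z = V t₀ z) : IsMixtureOfOthers V t₀ := by
  have hq : 1 - p t₀ ≠ 0 := (sub_pos.mpr hp₀).ne'
  let lam : T → ℝ := fun t => if t = t₀ then 0 else p t / (1 - p t₀)
  have hlam (f : T → ℝ) : ∑ t, lam t * f t = (∑ t, p t * f t - p t₀ * f t₀) / (1 - p t₀) := by
    rw [← add_sum_erase univ _ (mem_univ t₀),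
      ← add_sum_erase univ (fun t => p t * f t) (mem_univ t₀), add_sub_cancel_left, sum_div]
    simp only [lam, if_true, zero_mul, zero_add]
    refine sum_congr rfl fun t ht => ?_
    rw [if_neg (ne_of_mem_erase ht), div_mul_eq_mul_div]
  refine ⟨lam, fun t => ?_, if_pos rfl, ?_, fun z => ?_⟩
  · rcases eq_or_ne t t₀ with ht | ht
    · exact (if_pos ht).ge
    · exact (div_nonneg (hp.1 t) (sub_pos.mpr hp₀).le).trans_eq (if_neg ht).symm
  · have hone := hlam fun _ => 1
    simp only [mul_one, hp.2, div_self hq] at hone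
    exact hone
  · rw [hlam, h]
    field_simp

variable [Fintype Z]

lemma continuous_klDiv_sum_mul {Q : Z → ℝ} (hVQ : ∀ t, AbsCont (V t) Q) :
    Continuous fun p : T → ℝ => klDiv (fun z => ∑ t, p t * V t z) Q := by
  refine continuous_finsetSum _ fun z _ => ?_
  rcases eq_or_ne (Q z) 0 with hz | hz
  · simp only [fun t => hVQ t z hz, mul_zero, sum_const_zero, zero_mul]
    exact continuous_const
  · have hscale (x : ℝ) : x * Real.log (x / Q z) = Q z * (x / Q z * Real.log (x / Q z)) := by
      field_simp
    simp only [hscale]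
    exact continuous_const.mul (Real.continuous_mul_log.comp (by fun_prop))

lemma exists_klDiv_threshold (hV : ∀ t, IsDist (V t)) (hAC : ∀ t, AbsCont (V t) (V t₀))
    (hNC : ¬ IsMixtureOfOthers V t₀) {η : ℝ} (hη : 0 < η) :
    ∃ γ > 0, ∀ p ∈ stdSimplex ℝ T,
      klDiv (fun z => ∑ t, p t * V t z) (V t₀) < γ → 1 - p t₀ < η := by
  let S : Set (T → ℝ) := stdSimplex ℝ T ∩ {p | η ≤ 1 - p t₀}
  have hS : IsCompact S := (isCompact_stdSimplex ℝ T).inter_right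
    (isClosed_le continuous_const (by fun_prop))
  rcases S.eq_empty_or_nonempty with hempty | hne
  · refine ⟨1, one_pos, fun p hp _ => lt_of_not_ge fun hle => ?_⟩
    exact hempty.subset ⟨hp, hle⟩
  obtain ⟨q, hq, hmin⟩ := hS.exists_isMinOn hne (continuous_klDiv_sum_mul hAC).continuousOn
  refine ⟨klDiv (fun z => ∑ t, q t * V t z) (V t₀), lt_of_not_ge fun hle => hNC ?_, fun p hp hlt =>
    lt_of_not_ge fun hge => hlt.not_ge (hmin ⟨hp, hge⟩)⟩
  have hAC' : AbsCont (fun z => ∑ t, q t * V t z) (V t₀) := fun z hz =>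
    sum_eq_zero fun t _ => by rw [hAC t z hz, mul_zero]
  refine isMixtureOfOthers_of_sum_mul_eq hq.1 (by linarith [hq.2.out]) ?_
  exact congrFun (eq_of_klDiv_nonpos (IsDist.sum_mul hV hq.1) (hV t₀) hAC' hle)

end Mixtures

/-! ### Random binary inputs with few ones -/

section BinaryInputs

variable {K : ℕ}

/-- The set of active users of a binary input, the inverse of `xU`. -/
def activeUsers (x : Fin K → Bool) : Finset (Fin K) := {k | x k}

lemma xU_activeUsers (x : Fin K → Bool) : xU (activeUsers x) = x := by
  funext k
  simp [xU, activeUsers]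

lemma activeUsers_eq_empty_iff {x : Fin K → Bool} : activeUsers x = ∅ ↔ x = xU ∅ := by
  refine ⟨fun h => by rw [← h, xU_activeUsers], ?_⟩
  rintro rfl
  simp [activeUsers, xU]

lemma AbsCont.of_activeUsers {Z : Type*} {W : (Fin K → Bool) → Z → ℝ}
    (h : ∀ U : Finset (Fin K), U.Nonempty → AbsCont (W (xU U)) (W (xU ∅))) (x : Fin K → Bool) :
    AbsCont (W x) (W (xU ∅)) := by
  rcases (activeUsers x).eq_empty_or_nonempty with hx | hx
  · rw [activeUsers_eq_empty_iff.mp hx]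
    exact fun z hz => hz
  · exact xU_activeUsers x ▸ h _ hx

/-- A function of the input is additive over the active users up to the number of collisions. -/
lemma abs_sub_additive_le {F : (Fin K → Bool) → ℝ} {B : ℝ} (hF : ∀ x, |F x| ≤ B)
    (S : Finset (Fin K)) :
    |F (xU S) - F (xU ∅) - ∑ k ∈ S, (F (xU {k}) - F (xU ∅))| ≤ 4 * B * #S.offDiag := by
  have hB : 0 ≤ B := (abs_nonneg _).trans (hF (xU ∅))
  have hdiff x y : |F x - F y| ≤ 2 * B := by
    linarith [abs_sub (F x) (F y), hF x, hF y]
  rcases S.eq_empty_or_nonempty with rfl | hS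
  · simp
  rcases hS.card_pos.nat_succ_le.eq_or_lt with h1 | h2
  · obtain ⟨k, rfl⟩ := card_eq_one.mp h1.symm
    simp
  have hcard : (#S + 1 : ℝ) ≤ 2 * #S.offDiag := by
    rw [offDiag_card, Nat.cast_sub (Nat.le_mul_self _), Nat.cast_mul]
    have : (2 : ℝ) ≤ #S := by exact_mod_cast h2
    nlinarith
  calc |F (xU S) - F (xU ∅) - ∑ k ∈ S, (F (xU {k}) - F (xU ∅))|
      ≤ |F (xU S) - F (xU ∅)| + ∑ k ∈ S, |F (xU {k}) - F (xU ∅)| :=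
        (abs_sub _ _).trans (by gcongr; exact abs_sum_le_sum_abs _ _)
    _ ≤ 2 * B + ∑ _k ∈ S, 2 * B := by gcongr <;> exact hdiff _ _
    _ = 2 * B * (#S + 1) := by rw [sum_const, nsmul_eq_mul]; ring
    _ ≤ 2 * B * (2 * #S.offDiag) := by gcongr
    _ = 4 * B * #S.offDiag := by ring

end BinaryInputs

section RandomInputs

variable {K : ℕ} {Ω : Fin K → Type*} [∀ k, Fintype (Ω k)]

/-- The probability that user `k` is active when the users' input bits `X k` are evaluated at
independent uniform arguments. -/
def activity (X : ∀ k, Ω k → Bool) (k : Fin K) : ℝ :=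
  𝔼 a, if X k a then 1 else 0

/-- The output distribution of the channel `W` for the independent random input bits `X k`. -/
def outputLaw {Z : Type*} (W : (Fin K → Bool) → Z → ℝ) (X : ∀ k, Ω k → Bool) (z : Z) : ℝ :=
  𝔼 ω : ∀ k, Ω k, W (fun k => X k (ω k)) z

lemma activity_nonneg (X : ∀ k, Ω k → Bool) (k : Fin K) : 0 ≤ activity X k :=
  expect_nonneg fun a _ => by split_ifs <;> norm_num

variable [∀ k, Nonempty (Ω k)] (X : ∀ k, Ω k → Bool)

lemma activity_le_one (k : Fin K) : activity X k ≤ 1 :=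
  expect_le univ_nonempty fun a _ => by split_ifs <;> norm_num

lemma expect_card_offDiag_activeUsers_le :
    𝔼 ω : ∀ k, Ω k, (#(activeUsers fun k => X k (ω k)).offDiag : ℝ) ≤ (∑ k, activity X k) ^ 2 := by
  have hcard (x : Fin K → Bool) : (#(activeUsers x).offDiag : ℝ)
      = ∑ kl ∈ univ.offDiag, (if x kl.1 then 1 else 0) * if x kl.2 then 1 else 0 := by
    simp only [mul_ite, mul_one, mul_zero, ← ite_and]
    rw [sum_boole]
    congr 2
    ext kl
    simp only [activeUsers, mem_offDiag, mem_filter, mem_univ, true_and]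
    tauto
  calc 𝔼 ω : ∀ k, Ω k, (#(activeUsers fun k => X k (ω k)).offDiag : ℝ)
      = ∑ kl ∈ univ.offDiag, activity X kl.1 * activity X kl.2 := by
        simp only [hcard]
        rw [expect_sum_comm]
        refine sum_congr rfl fun kl hkl => ?_
        rw [expect_pi_eval_pair (mem_offDiag.mp hkl).2.2
          fun a b => (if X kl.1 a then (1 : ℝ) else 0) * if X kl.2 b then 1 else 0]
        exact (expect_mul_expect _ _ _ _).symm
    _ ≤ ∑ kl ∈ univ ×ˢ univ, activity X kl.1 * activity X kl.2 :=
        sum_le_sum_of_subset_of_nonneg (fun kl _ => by simp)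
          fun kl _ _ => mul_nonneg (activity_nonneg X _) (activity_nonneg X _)
    _ = (∑ k, activity X k) ^ 2 := by rw [sum_product, sq, sum_mul_sum]

lemma abs_expect_sub_additive_le {F : (Fin K → Bool) → ℝ} {B : ℝ} (hF : ∀ x, |F x| ≤ B) :
    |𝔼 ω : ∀ k, Ω k, F (fun k => X k (ω k)) - F (xU ∅)
      - ∑ k, activity X k * (F (xU {k}) - F (xU ∅))| ≤ 4 * B * (∑ k, activity X k) ^ 2 := by
  have hB : 0 ≤ B := (abs_nonneg _).trans (hF (xU ∅))
  have hlin : ∑ k, activity X k * (F (xU {k}) - F (xU ∅)) = 𝔼 ω : ∀ k, Ω k,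
      ∑ k ∈ activeUsers (fun k => X k (ω k)), (F (xU {k}) - F (xU ∅)) := by
    simp only [activeUsers, sum_filter]
    rw [expect_sum_comm]
    refine sum_congr rfl fun k _ => ?_
    rw [expect_pi_eval k fun a => if X k a then F (xU {k}) - F (xU ∅) else 0, activity, expect_mul]
    simp only [ite_mul, one_mul, zero_mul]
  calc _ = |𝔼 ω : ∀ k, Ω k, (F (fun k => X k (ω k)) - F (xU ∅)
          - ∑ k ∈ activeUsers (fun k => X k (ω k)), (F (xU {k}) - F (xU ∅)))| := by
        rw [expect_sub_distrib, expect_sub_distrib, Fintype.expect_const, hlin]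
    _ ≤ 𝔼 ω : ∀ k, Ω k, 4 * B * (#(activeUsers fun k => X k (ω k)).offDiag : ℝ) := by
        refine (abs_expect_le _ _).trans (expect_le_expect fun ω _ => ?_)
        have h := abs_sub_additive_le hF (activeUsers fun k => X k (ω k))
        rwa [xU_activeUsers] at h
    _ ≤ 4 * B * (∑ k, activity X k) ^ 2 := by
        rw [← mul_expect]
        exact mul_le_mul_of_nonneg_left (expect_card_offDiag_activeUsers_le X) (by positivity)

variable {Z : Type*} [Fintype Z] {W : (Fin K → Bool) → Z → ℝ}

lemma IsDist.outputLaw (hW : ∀ x, IsDist (W x)) : IsDist (outputLaw W X) :=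
  IsDist.expect fun _ => hW _

lemma abs_outputLaw_sub_additive_le (hW : ∀ x, IsDist (W x)) (z : Z) :
    |outputLaw W X z - W (xU ∅) z - ∑ k, activity X k * (W (xU {k}) z - W (xU ∅) z)|
      ≤ 4 * (∑ k, activity X k) ^ 2 := by
  have h := abs_expect_sub_additive_le X (F := fun x => W x z) (B := 1) fun x => by
    rw [abs_of_nonneg ((hW x).1 z)]
    exact (hW x).le_one z
  rwa [mul_one] at h

/-- If the silent distribution is not a mixture of the others, then an output close to it in
relative entropy can only come from inputs that are almost always zero. -/
lemma exists_klDiv_outputLaw_threshold {W : (Fin K → Bool) → Z → ℝ} (hW : ∀ x, IsDist (W x))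
    (hAC : ∀ x, AbsCont (W x) (W (xU ∅)))
    (hNC : ¬ IsMixtureOfOthers (fun U : Finset (Fin K) => W (xU U)) ∅) {η : ℝ} (hη : 0 < η) :
    ∃ γ > 0, ∀ {Ω : Fin K → Type*} [∀ k, Fintype (Ω k)] [∀ k, Nonempty (Ω k)]
      (X : ∀ k, Ω k → Bool), klDiv (outputLaw W X) (W (xU ∅)) < γ → ∀ k, activity X k < η := by
  obtain ⟨γ, hγ, h⟩ := exists_klDiv_threshold (fun U => hW (xU U)) (fun U => hAC (xU U)) hNC hη
  refine ⟨γ, hγ, fun {Ω} _ _ X hlt k => ?_⟩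
  let p (U : Finset (Fin K)) : ℝ :=
    𝔼 ω : ∀ k, Ω k, if activeUsers (fun k => X k (ω k)) = U then 1 else 0
  have hp : p ∈ stdSimplex ℝ (Finset (Fin K)) := by
    refine ⟨fun U => expect_nonneg fun ω _ => by split_ifs <;> norm_num, ?_⟩
    rw [← expect_sum_comm]
    simp only [sum_ite_eq, mem_univ, if_true, Fintype.expect_const]
  have hmix : (fun z => ∑ U, p U * W (xU U) z) = outputLaw W X := by
    funext z
    simp only [p, expect_mul, ite_mul, one_mul, zero_mul, outputLaw]
    rw [← expect_sum_comm]
    simp only [sum_ite_eq, mem_univ, if_true, xU_activeUsers]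
  refine lt_of_le_of_lt ?_ (h p hp (hmix ▸ hlt))
  have hp₀ : 1 - p ∅ = 𝔼 ω : ∀ k, Ω k,
      (1 - if activeUsers (fun k => X k (ω k)) = ∅ then 1 else 0 : ℝ) := by
    rw [expect_sub_distrib, Fintype.expect_const]
  rw [hp₀, activity, ← expect_pi_eval k fun a => if X k a then (1 : ℝ) else 0]
  refine expect_le_expect fun ω _ => ?_
  by_cases hk : X k (ω k)
  · have : activeUsers (fun k => X k (ω k)) ≠ ∅ := ne_empty_of_mem (a := k) (by simpa [activeUsers])
    simp [hk, this]
  · rw [if_neg hk]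
    split_ifs <;> norm_num

end RandomInputs

lemma tendsto_klDiv_div_sq_chiRho {K : ℕ} {Z α : Type*} [Fintype Z] {W : (Fin K → Bool) → Z → ℝ}
    {l : Filter α} {R : α → Z → ℝ} {p : α → Fin K → ℝ} {s e : α → ℝ} {ρ : Fin K → ℝ}
    (hW : IsDist (W (xU ∅))) (hR : ∀ i, IsDist (R i)) (hRW : ∀ i, AbsCont (R i) (W (xU ∅)))
    (hs : Tendsto s l (𝓝 0)) (hs0 : ∀ᶠ i in l, s i ≠ 0)
    (hp : ∀ k, Tendsto (fun i => p i k / s i) l (𝓝 (ρ k)))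
    (he : Tendsto (fun i => e i / s i) l (𝓝 0))
    (hexp : ∀ i z, |R i z - W (xU ∅) z - ∑ k, p i k * (W (xU {k}) z - W (xU ∅) z)| ≤ e i) :
    Tendsto (fun i => klDiv (R i) (W (xU ∅)) / s i ^ 2) l (𝓝 (chiRho W ρ / 2)) := by
  refine tendsto_klDiv_div_sq (fun i => (hR i).2) hW.2 hRW hs hs0 fun z => ?_
  have hlin : Tendsto (fun i => ∑ k, p i k / s i * (W (xU {k}) z - W (xU ∅) z)) l
      (𝓝 (∑ k, ρ k * (W (xU {k}) z - W (xU ∅) z))) :=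
    tendsto_finsetSum _ fun k _ => (hp k).mul_const _
  have hrem : Tendsto (fun i => (R i z - W (xU ∅) z
      - ∑ k, p i k * (W (xU {k}) z - W (xU ∅) z)) / s i) l (𝓝 0) := by
    refine squeeze_zero_norm (fun i => ?_) (by simpa using he.abs)
    rw [norm_div, Real.norm_eq_abs, Real.norm_eq_abs, abs_div (e i)]
    exact div_le_div_of_nonneg_right ((hexp i z).trans (le_abs_self _)) (abs_nonneg _)
  have hadd := hlin.add hrem
  rw [add_zero] at hadd
  refine hadd.congr fun i => ?_
  rw [sub_div _ (∑ k, _), sum_div]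
  simp only [div_mul_eq_mul_div, add_sub_cancel]

/-! ### Codes -/

section Codes

variable {K n : ℕ} {M L : Fin K → ℕ} (enc : ∀ k, Fin (M k) × Fin (L k) → Fin n → Bool)

/-- The `j`-th input bits of the code as functions of the users' message-key pairs. -/
def letter (j : Fin n) (k : Fin K) (a : Fin (M k) × Fin (L k)) : Bool := enc k a j

/-- The fraction of ones in the codeword of user `k`, averaged over messages and keys. -/
def meanActivity (k : Fin K) : ℝ := 𝔼 j, activity (letter enc j) k

/-- The single-letter output distribution of a code, averaged over the channel uses. -/
def meanOutput {Z : Type*} (W : (Fin K → Bool) → Z → ℝ) (z : Z) : ℝ :=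
  𝔼 j, outputLaw W (letter enc j) z

lemma meanActivity_nonneg (k : Fin K) : 0 ≤ meanActivity enc k :=
  expect_nonneg fun _ _ => activity_nonneg _ k

lemma AbsCont.meanOutput {Z : Type*} {W : (Fin K → Bool) → Z → ℝ}
    (hAC : ∀ x, AbsCont (W x) (W (xU ∅))) :
    AbsCont (meanOutput enc W) (W (xU ∅)) :=
  AbsCont.expect fun _ => AbsCont.expect fun _ => hAC _

lemma inv_prod_mul_sum_sum_eq_expect (F : (∀ k, Fin (M k)) → (∀ k, Fin (L k)) → ℝ) :
    (∏ k, ((M k : ℝ) * L k))⁻¹ * ∑ m, ∑ l, F m l = 𝔼 m, 𝔼 l, F m l := by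
  simp only [Fintype.expect_eq_sum_div_card, Fintype.card_pi, Fintype.card_fin, Nat.cast_prod,
    prod_mul_distrib, ← sum_div]
  field

lemma Pe_eq_expect {Y : Type*} [Fintype Y] (W : (Fin K → Bool) → Y → ℝ)
    (dec : (Fin n → Y) → (∀ k, Fin (L k)) → ∀ k, Fin (M k)) :
    Pe W M L enc dec = 𝔼 m, 𝔼 l, ∑ y, prodChannel W n (fun j k => enc k (m k, l k) j) y
      * if dec y l = m then 0 else 1 :=
  inv_prod_mul_sum_sum_eq_expect _

lemma Pe_nonneg {Y : Type*} [Fintype Y] {W : (Fin K → Bool) → Y → ℝ} (hW : ∀ x, IsDist (W x))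
    (dec : (Fin n → Y) → (∀ k, Fin (L k)) → ∀ k, Fin (M k)) : 0 ≤ Pe W M L enc dec := by
  rw [Pe_eq_expect]
  refine expect_nonneg fun m _ => expect_nonneg fun l _ => sum_nonneg fun y _ =>
    mul_nonneg (prod_nonneg fun j _ => (hW _).1 _) ?_
  split_ifs <;> norm_num

variable {Z : Type*} [Fintype Z] (W : (Fin K → Bool) → Z → ℝ)

lemma Qhat_eq_expect :
    Qhat W M L enc = fun z => 𝔼 ω : ∀ k, Fin (M k) × Fin (L k),
      ∏ j, W (fun k => enc k (ω k) j) (z j) :=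
  funext fun z => (inv_prod_mul_sum_sum_eq_expect _).trans
    (expect_pi_prodMk (Ω := fun k => Fin (M k)) (Ω' := fun k => Fin (L k))
      fun ω => ∏ j, W (fun k => enc k (ω k) j) (z j)).symm

variable {W}

lemma marginal_Qhat (hW : ∀ x, IsDist (W x)) (j : Fin n) :
    marginal (Qhat W M L enc) j = outputLaw W (letter enc j) := by
  funext a
  have hω (ω : ∀ k, Fin (M k) × Fin (L k)) :=
    congrFun (marginal_pi (P := fun i => W fun k => enc k (ω k) i) (fun _ => hW _) j) a
  simp only [marginal, ← sum_filter] at hω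
  simp only [Qhat_eq_expect, marginal, outputLaw, letter, ← sum_filter, ← expect_sum_comm, hω]

lemma AbsCont.Qhat (hAC : ∀ x, AbsCont (W x) (W (xU ∅))) :
    AbsCont (Qhat W M L enc) fun z => ∏ j, W (xU ∅) (z j) :=
  Qhat_eq_expect enc W ▸ AbsCont.expect fun _ => AbsCont.pi fun _ => hAC _

variable [∀ k, NeZero (M k)] [∀ k, NeZero (L k)]

lemma IsDist.Qhat (hW : ∀ x, IsDist (W x)) : IsDist (Qhat W M L enc) :=
  Qhat_eq_expect enc W ▸ IsDist.expect fun _ => IsDist.pi fun _ => hW _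

lemma sum_klDiv_outputLaw_le_deltaN (hW : ∀ x, IsDist (W x))
    (hAC : ∀ x, AbsCont (W x) (W (xU ∅))) :
    ∑ j, klDiv (outputLaw W (letter enc j)) (W (xU ∅)) ≤ deltaN W M L enc := by
  simp only [← marginal_Qhat enc hW]
  exact sum_klDiv_marginal_le (IsDist.Qhat enc hW) (fun _ => (hW _).1) (AbsCont.Qhat enc hAC)

lemma klDiv_outputLaw_le_deltaN (hW : ∀ x, IsDist (W x)) (hAC : ∀ x, AbsCont (W x) (W (xU ∅)))
    (j : Fin n) : klDiv (outputLaw W (letter enc j)) (W (xU ∅)) ≤ deltaN W M L enc :=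
  (single_le_sum (fun i _ => klDiv_nonneg (IsDist.outputLaw (letter enc i) hW) (hW _)
    (AbsCont.expect fun _ => hAC _)) (mem_univ j)).trans (sum_klDiv_outputLaw_le_deltaN enc hW hAC)

variable [NeZero n]

lemma IsDist.meanOutput (hW : ∀ x, IsDist (W x)) : IsDist (meanOutput enc W) :=
  IsDist.expect fun _ => IsDist.outputLaw _ hW

lemma mul_klDiv_meanOutput_le_deltaN (hW : ∀ x, IsDist (W x))
    (hAC : ∀ x, AbsCont (W x) (W (xU ∅))) :
    n * klDiv (meanOutput enc W) (W (xU ∅)) ≤ deltaN W M L enc :=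
  calc n * klDiv (meanOutput enc W) (W (xU ∅))
      ≤ n * 𝔼 j, klDiv (outputLaw W (letter enc j)) (W (xU ∅)) := by
        gcongr
        exact klDiv_expect_le (fun j => IsDist.outputLaw (letter enc j) hW) (hW _).1
          fun j => AbsCont.expect fun _ => hAC _
    _ = ∑ j, klDiv (outputLaw W (letter enc j)) (W (xU ∅)) := by
        simpa using Fintype.card_mul_expect fun j => klDiv (outputLaw W (letter enc j)) (W (xU ∅))
    _ ≤ deltaN W M L enc := sum_klDiv_outputLaw_le_deltaN enc hW hAC

lemma abs_meanOutput_sub_additive_le (hW : ∀ x, IsDist (W x)) {η : ℝ}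
    (hη : ∀ j, ∑ k, activity (letter enc j) k ≤ η) (z : Z) :
    |meanOutput enc W z - W (xU ∅) z - ∑ k, meanActivity enc k * (W (xU {k}) z - W (xU ∅) z)|
      ≤ 4 * η * ∑ k, meanActivity enc k := by
  have hs (j : Fin n) : 0 ≤ ∑ k, activity (letter enc j) k :=
    sum_nonneg fun k _ => activity_nonneg _ k
  calc _ = |𝔼 j, (outputLaw W (letter enc j) z - W (xU ∅) z
        - ∑ k, activity (letter enc j) k * (W (xU {k}) z - W (xU ∅) z))| := by
        simp only [meanOutput, meanActivity, expect_sub_distrib, Fintype.expect_const,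
          expect_sum_comm, expect_mul]
    _ ≤ 𝔼 j, 4 * (η * ∑ k, activity (letter enc j) k) := by
        refine (abs_expect_le _ _).trans (expect_le_expect fun j _ => ?_)
        refine (abs_outputLaw_sub_additive_le (letter enc j) hW z).trans ?_
        rw [sq]
        have := hs j
        gcongr
        exact hη j
    _ = 4 * η * ∑ k, meanActivity enc k := by
        simp only [meanActivity, ← mul_expect, expect_sum_comm, mul_assoc]

end Codes

/-! ### A sharp Fano inequality -/

section MetaConverse

/-- Donsker–Varadhan with a test function taking one value on success and another on failure; the
free parameter `θ` makes the additive loss arbitrarily small. -/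
lemma one_sub_error_mul_log_le {Ω Y : Type*} [Fintype Ω] [Nonempty Ω] [Fintype Y]
    {P T : Ω → Y → ℝ} {S : Ω → Y → Prop} [∀ ω y, Decidable (S ω y)] {N θ : ℝ}
    (hP : ∀ ω, IsDist (P ω)) (hT : ∀ ω, IsDist (T ω)) (hPT : ∀ ω, AbsCont (P ω) (T ω))
    (hN : 0 < N) (hθ : 0 < θ) (hS : 𝔼 ω, ∑ y, T ω y * (if S ω y then 1 else 0) ≤ N⁻¹) :
    (1 - 𝔼 ω, ∑ y, P ω y * (if S ω y then 0 else 1)) * Real.log (θ * N) - Real.log (1 + θ)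
      ≤ 𝔼 ω, klDiv (P ω) (T ω) := by
  let G (ω : Ω) (y : Y) : ℝ := if S ω y then θ * N / (1 + θ) else 1 / (1 + θ)
  have hG ω y : 0 < G ω y := by
    dsimp only [G]
    split_ifs <;> positivity
  have hlog ω : ∑ y, P ω y * Real.log (G ω y)
      = Real.log (θ * N) - Real.log (1 + θ)
        - (∑ y, P ω y * if S ω y then 0 else 1) * Real.log (θ * N) := by
    rw [← (hP ω).sum_mul_const (Real.log (θ * N) - _), sum_mul, ← sum_sub_distrib]
    refine sum_congr rfl fun y _ => ?_
    dsimp only [G]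
    split_ifs <;> rw [Real.log_div (by positivity) (by positivity)]
    · ring
    · rw [Real.log_one]; ring
  have hmass ω : ∑ y, T ω y * G ω y ≤ θ * N / (1 + θ) * (∑ y, T ω y * if S ω y then 1 else 0)
      + 1 / (1 + θ) := by
    rw [← (hT ω).sum_mul_const (1 / (1 + θ)), mul_sum, ← sum_add_distrib]
    refine sum_le_sum fun y _ => ?_
    have : 0 ≤ T ω y * (1 / (1 + θ)) := mul_nonneg ((hT ω).1 y) (by positivity)
    dsimp only [G]
    split_ifs <;> linarith
  have hDV : 𝔼 ω, ∑ y, P ω y * Real.log (G ω y)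
      ≤ 𝔼 ω, (klDiv (P ω) (T ω) + ∑ y, T ω y * G ω y - 1) := expect_le_expect fun ω _ =>
    sum_mul_log_le_klDiv (hP ω) (hPT ω) (hT ω).1 (fun y => (hG ω y).le) fun y _ => (hG ω y).ne'
  have hone : 𝔼 ω, ∑ y, T ω y * G ω y ≤ 1 :=
    calc 𝔼 ω, ∑ y, T ω y * G ω y
        ≤ θ * N / (1 + θ) * (𝔼 ω, ∑ y, T ω y * if S ω y then 1 else 0) + 1 / (1 + θ) := by
          refine (expect_le_expect fun ω _ => hmass ω).trans_eq ?_
          rw [expect_add_distrib, mul_expect, Fintype.expect_const]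
      _ ≤ θ * N / (1 + θ) * N⁻¹ + 1 / (1 + θ) := by gcongr
      _ = 1 := by field
  simp only [hlog, expect_sub_distrib, expect_add_distrib, Fintype.expect_const, ← expect_mul]
    at hDV
  linarith

lemma expect_decode_eq_le {ι Y : Type*} [Fintype ι] [DecidableEq ι] {A : ι → Type*}
    [∀ i, Fintype (A i)] [∀ i, Nonempty (A i)] [∀ i, DecidableEq (A i)]
    [Fintype Y] {T : (∀ i, A i) → Y → ℝ} {k : ι} (hT : ∀ m, IsDist (T m))
    (hk : ∀ m a, T (Function.update m k a) = T m) (dec : Y → ∀ i, A i) :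
    𝔼 m, ∑ y, T m y * (if dec y = m then 1 else 0) ≤ (Fintype.card (A k) : ℝ)⁻¹ := by
  rw [← expect_pi_update k]
  refine expect_le univ_nonempty fun m _ => ?_
  have hguess (b : A k) : 𝔼 a, (if a = b then 1 else 0 : ℝ) = (Fintype.card (A k) : ℝ)⁻¹ := by
    rw [Fintype.expect_eq_sum_div_card, sum_ite_eq', if_pos (mem_univ b), one_div]
  calc 𝔼 a, ∑ y, T (Function.update m k a) y * (if dec y = Function.update m k a then 1 else 0)
      ≤ 𝔼 a, ∑ y, T m y * (if a = dec y k then 1 else 0) := by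
        simp only [hk]
        gcongr with a _ y _
        · exact (hT m).1 y
        by_cases h : dec y = Function.update m k a
        · simp [h]
        · rw [if_neg h]
          split_ifs <;> norm_num
    _ = (Fintype.card (A k) : ℝ)⁻¹ := by
        rw [expect_sum_comm]
        simp only [← mul_expect, hguess, ← sum_mul, (hT m).2, one_mul]

end MetaConverse

section Decoupling

variable {K : ℕ} {Y : Type*} (W : (Fin K → Bool) → Y → ℝ) (k : Fin K) (ε : ℝ) (x : Fin K → Bool)

/-- The channel `W` with user `k` disconnected: if the other users are silent then so is the
channel, otherwise the input of user `k` is replaced by a Bernoulli variable of parameter `ε`. -/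
def decoupled : Y → ℝ :=
  if Function.update x k false = xU ∅ then W (xU ∅)
  else fun y => (1 - ε) * W (Function.update x k false) y + ε * W (Function.update x k true) y

lemma decoupled_update (b : Bool) :
    decoupled W k ε (Function.update x k b) = decoupled W k ε x := by
  simp only [decoupled, Function.update_idem]

variable {W k ε x}

lemma decoupled_of_update_eq (h : Function.update x k false = xU ∅) :
    decoupled W k ε x = W (xU ∅) :=
  if_pos h

lemma eq_xU_of_update_eq (h : Function.update x k false = xU ∅) :
    x = if x k then xU {k} else xU ∅ := by
  funext i
  have hi := congrFun h i
  rcases eq_or_ne i k with rfl | hik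
  · cases hx : x i <;> simp [xU]
  · rw [Function.update_of_ne hik] at hi
    rw [hi]
    split_ifs <;> simp [xU, hik]

variable [Fintype Y] (hW : ∀ x, IsDist (W x))
include hW

lemma IsDist.decoupled (hε : 0 < ε) (hε1 : ε < 1) : IsDist (decoupled W k ε x) := by
  unfold _root_.decoupled
  split_ifs
  · exact hW _
  · refine ⟨fun y => add_nonneg (mul_nonneg (by linarith) ((hW _).1 y))
      (mul_nonneg hε.le ((hW _).1 y)), ?_⟩
    rw [sum_add_distrib, ← mul_sum, ← mul_sum, (hW _).2, (hW _).2]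
    ring

lemma mul_le_decoupled (hε : 0 < ε) (hε1 : ε < 1) (h : Function.update x k false ≠ xU ∅) (y : Y) :
    (if x k then ε else 1 - ε) * W x y ≤ decoupled W k ε x y := by
  have h0 := mul_nonneg (by linarith : 0 ≤ 1 - ε) ((hW (Function.update x k false)).1 y)
  have h1 := mul_nonneg hε.le ((hW (Function.update x k true)).1 y)
  have hx := Function.update_eq_self k x
  rw [decoupled, if_neg h]
  cases hk : x k <;> rw [hk] at hx <;> simp only [hx, Bool.false_eq_true, if_false, if_true]
  · linarith
  · linarith

lemma AbsCont.decoupled (hAC : AbsCont (W (xU {k})) (W (xU ∅))) (hε : 0 < ε) (hε1 : ε < 1) :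
    AbsCont (W x) (decoupled W k ε x) := by
  by_cases h : Function.update x k false = xU ∅
  · rw [decoupled_of_update_eq h, eq_xU_of_update_eq h]
    split_ifs
    exacts [hAC, fun y hy => hy]
  · intro y hy
    have hle := mul_le_decoupled hW hε hε1 h y
    rw [hy] at hle
    refine le_antisymm (nonpos_of_mul_nonpos_right hle ?_) ((hW x).1 y)
    split_ifs <;> linarith

lemma klDiv_decoupled_le (hAC : AbsCont (W (xU {k})) (W (xU ∅))) (hε : 0 < ε) (hε1 : ε < 1) :
    klDiv (W x) (decoupled W k ε x)
      ≤ (if x k then 1 else 0) * klDiv (W (xU {k})) (W (xU ∅))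
        + (∑ i ∈ univ.erase k, if x i then 1 else 0)
          * (-Real.log (1 - ε) + -Real.log ε * if x k then 1 else 0) := by
  have hl0 : 0 ≤ -Real.log (1 - ε) :=
    neg_nonneg.mpr (Real.log_nonpos (by linarith) (by linarith))
  have hl1 : 0 ≤ -Real.log ε := neg_nonneg.mpr (Real.log_nonpos hε.le hε1.le)
  have hD := klDiv_nonneg (hW _) (hW _) hAC
  have hb (i : Fin K) : (0 : ℝ) ≤ if x i then 1 else 0 := by split_ifs <;> norm_num
  by_cases h : Function.update x k false = xU ∅
  · have hval : klDiv (W x) (W (xU ∅))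
        = (if x k then 1 else 0) * klDiv (W (xU {k})) (W (xU ∅)) := by
      rw [eq_xU_of_update_eq h]
      cases x k <;> simp [klDiv, xU]
    rw [decoupled_of_update_eq h, hval]
    exact le_add_of_nonneg_right (mul_nonneg (sum_nonneg fun i _ => hb i)
      (add_nonneg hl0 (mul_nonneg hl1 (hb k))))
  · obtain ⟨i, hik, hi⟩ : ∃ i ≠ k, x i = true := by
      by_contra! hnot
      refine h (funext fun i => ?_)
      rcases eq_or_ne i k with rfl | hik
      · simp [xU]
      · simpa [xU, hik] using hnot i hik
    have hone : (1 : ℝ) ≤ ∑ i ∈ univ.erase k, if x i then 1 else 0 := by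
      simpa [hi] using single_le_sum (f := fun i => if x i then (1 : ℝ) else 0)
        (fun i _ => hb i) (mem_erase.mpr ⟨hik, mem_univ i⟩)
    calc klDiv (W x) (decoupled W k ε x)
        ≤ -Real.log (if x k then ε else 1 - ε) :=
          klDiv_le_neg_log (hW x) (by split_ifs <;> linarith) (mul_le_decoupled hW hε hε1 h)
      _ ≤ -Real.log (1 - ε) + -Real.log ε * if x k then 1 else 0 := by split_ifs <;> linarith
      _ ≤ _ := by
        nlinarith [hb k, mul_nonneg (hb k) hD, mul_nonneg (sub_nonneg.mpr hone)
          (add_nonneg hl0 (mul_nonneg hl1 (hb k)))]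

end Decoupling

section Fano

variable {K : ℕ} {Ω : Fin K → Type*} [∀ k, Fintype (Ω k)] [∀ k, Nonempty (Ω k)] {Y : Type*}
  [Fintype Y] {W : (Fin K → Bool) → Y → ℝ} {k : Fin K} {ε : ℝ}

lemma expect_klDiv_decoupled_le (X : ∀ k, Ω k → Bool) (hW : ∀ x, IsDist (W x))
    (hAC : AbsCont (W (xU {k})) (W (xU ∅))) (hε : 0 < ε) (hε1 : ε < 1) :
    𝔼 ω : ∀ k, Ω k,
        klDiv (W fun i => X i (ω i)) (decoupled W k ε fun i => X i (ω i))
      ≤ activity X k * klDiv (W (xU {k})) (W (xU ∅))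
        + (∑ i ∈ univ.erase k, activity X i)
          * (-Real.log (1 - ε) + -Real.log ε * activity X k) := by
  let b (i : Fin K) (a : Ω i) : ℝ := if X i a then 1 else 0
  have heval (i : Fin K) : 𝔼 ω : ∀ k, Ω k, b i (ω i) = activity X i := expect_pi_eval i (b i)
  have hpair : ∀ i ∈ univ.erase k,
      𝔼 ω : ∀ k, Ω k, b i (ω i) * b k (ω k) = activity X i * activity X k := fun i hi => by
    rw [expect_pi_eval_pair (mem_erase.mp hi).1 fun a c => b i a * b k c]
    exact (expect_mul_expect _ _ _ _).symm
  refine (expect_le_expect fun ω _ => klDiv_decoupled_le hW hAC hε hε1).trans_eq ?_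
  calc _ = 𝔼 ω : ∀ k, Ω k, (b k (ω k) * klDiv (W (xU {k})) (W (xU ∅))
        + ((∑ i ∈ univ.erase k, b i (ω i)) * -Real.log (1 - ε)
          + (∑ i ∈ univ.erase k, b i (ω i) * b k (ω k)) * -Real.log ε)) :=
        expect_congr rfl fun ω _ => by rw [← sum_mul]; ring
    _ = _ := by
        rw [expect_add_distrib, expect_add_distrib, ← expect_mul, ← expect_mul, ← expect_mul,
          expect_sum_comm, expect_sum_comm, sum_congr rfl hpair, heval,
          sum_congr rfl fun i _ => heval i, ← sum_mul]
        ring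

lemma expect_decode_decoupled_le [∀ k, DecidableEq (Ω k)] {n : ℕ} (hW : ∀ x, IsDist (W x))
    (hε : 0 < ε) (hε1 : ε < 1)
    (c : ∀ i, Ω i → Fin n → Bool) (dec : (Fin n → Y) → ∀ i, Ω i) :
    𝔼 m, ∑ y, (∏ j, decoupled W k ε (fun i => c i (m i) j) (y j))
      * (if dec y = m then 1 else 0) ≤ (Fintype.card (Ω k) : ℝ)⁻¹ := by
  have hinput (m : ∀ i, Ω i) (a : Ω k) (j : Fin n) : (fun i => c i (Function.update m k a i) j)
      = Function.update (fun i => c i (m i) j) k (c k a j) := by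
    funext i
    rcases eq_or_ne i k with rfl | hik
    · simp
    · simp [hik]
  exact expect_decode_eq_le (fun m => IsDist.pi fun j => IsDist.decoupled hW hε hε1)
    (fun m a => by simp only [hinput, decoupled_update]) dec

/-- The auxiliary channel ignores user `k`, so under it the decoder can only guess the message of
user `k`; comparing with the true channel bounds the size of that message. -/
lemma one_sub_Pe_mul_log_le {n : ℕ} {M L : Fin K → ℕ} [∀ k, NeZero (M k)] [∀ k, NeZero (L k)]
    {θ : ℝ} (hW : ∀ x, IsDist (W x)) (hAC : AbsCont (W (xU {k})) (W (xU ∅))) (hε : 0 < ε)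
    (hε1 : ε < 1) (hθ : 0 < θ) (enc : ∀ k, Fin (M k) × Fin (L k) → Fin n → Bool)
    (dec : (Fin n → Y) → (∀ k, Fin (L k)) → ∀ k, Fin (M k)) :
    (1 - Pe W M L enc dec) * Real.log (θ * M k) - Real.log (1 + θ)
      ≤ ∑ j, (activity (letter enc j) k * klDiv (W (xU {k})) (W (xU ∅))
        + (∑ i ∈ univ.erase k, activity (letter enc j) i)
          * (-Real.log (1 - ε) + -Real.log ε * activity (letter enc j) k)) := by
  let x (p : (∀ k, Fin (M k)) × ∀ k, Fin (L k)) (j : Fin n) (i : Fin K) : Bool :=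
    enc i (p.1 i, p.2 i) j
  have hsuccess : 𝔼 p, ∑ y, (∏ j, decoupled W k ε (x p j) (y j))
      * (if dec y p.2 = p.1 then 1 else 0) ≤ (M k : ℝ)⁻¹ := by
    rw [← univ_product_univ, expect_product, expect_comm]
    refine expect_le univ_nonempty fun l _ => ?_
    simpa only [Fintype.card_fin] using expect_decode_decoupled_le hW hε hε1
      (fun i a => enc i (a, l i)) fun y => dec y l
  have hmeta := one_sub_error_mul_log_le (fun p => IsDist.pi fun j => hW (x p j))
    (fun p => IsDist.pi fun j => IsDist.decoupled hW hε hε1)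
    (fun p => AbsCont.pi fun j => AbsCont.decoupled hW hAC hε hε1)
    (Nat.cast_pos.mpr (NeZero.pos (M k))) hθ hsuccess
  rw [← univ_product_univ, expect_product, expect_product] at hmeta
  rw [Pe_eq_expect]
  refine hmeta.trans ?_
  simp only [klDiv_pi (fun _ => hW _) fun _ => AbsCont.decoupled hW hAC hε hε1]
  rw [← expect_pi_prodMk fun ω => ∑ j, klDiv (W fun i => enc i (ω i) j)
    (decoupled W k ε fun i => enc i (ω i) j), expect_sum_comm]
  exact sum_le_sum fun j _ => expect_klDiv_decoupled_le (letter enc j) hW hAC hε hε1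

end Fano

/-! ### The covert region -/

section Region

variable {K : ℕ} {Y Z : Type*} [Fintype Y] [Fintype Z] {Wy : (Fin K → Bool) → Y → ℝ}
  {Wz : (Fin K → Bool) → Z → ℝ} {ρ : Fin K → ℝ}

lemma continuous_chiRho : Continuous (chiRho Wz) :=
  continuous_finsetSum _ fun _ _ => by fun_prop

lemma chiRho_pos (hW : ∀ x, IsDist (Wz x)) (hAC : ∀ x, AbsCont (Wz x) (Wz (xU ∅)))
    (hNC : ¬ IsMixtureOfOthers (fun U : Finset (Fin K) => Wz (xU U)) ∅)
    (hρ : ρ ∈ stdSimplex ℝ (Fin K)) : 0 < chiRho Wz ρ := by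
  have hterm (z : Z) (_ : z ∈ univ) :
      0 ≤ (∑ k, ρ k * (Wz (xU {k}) z - Wz (xU ∅) z)) ^ 2 / Wz (xU ∅) z :=
    div_nonneg (sq_nonneg _) ((hW _).1 z)
  refine (sum_nonneg hterm).lt_of_ne fun hzero => hNC ?_
  let lam (T : Finset (Fin K)) : ℝ := ∑ k, if T = {k} then ρ k else 0
  have hlam (g : Finset (Fin K) → ℝ) : ∑ T, lam T * g T = ∑ k, ρ k * g {k} := by
    simp only [lam, sum_mul, ite_mul, zero_mul]
    rw [sum_comm]
    simp only [sum_ite_eq', mem_univ, if_true]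
  refine ⟨lam, fun T => sum_nonneg fun k _ => ?_, ?_, ?_, fun z => ?_⟩
  · split_ifs
    exacts [hρ.1 k, le_rfl]
  · exact sum_eq_zero fun k _ => if_neg (singleton_ne_empty k).symm
  · simpa only [mul_one, hρ.2] using hlam fun _ => 1
  · rw [hlam]
    rcases eq_or_ne (Wz (xU ∅) z) 0 with hz | hz
    · simp only [hz, fun x => hAC x z hz, mul_zero, sum_const_zero]
    · have hsq := (sum_eq_zero_iff_of_nonneg hterm).mp hzero.symm z (mem_univ z)
      have hlin := pow_eq_zero_iff two_ne_zero |>.mp ((div_eq_zero_iff.mp hsq).resolve_right hz)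
      simp only [mul_sub, sum_sub_distrib, ← sum_mul, hρ.2, one_mul] at hlin
      exact (sub_eq_zero.mp hlin).symm

/-- The claimed capacity region: the union over `ρ` in the simplex of the boxes with corner
`√(2/χ(ρ)) ρ_k D(P_k‖P_∅)`. -/
def covertRegion (Wy : (Fin K → Bool) → Y → ℝ) (Wz : (Fin K → Bool) → Z → ℝ) :
    Set (Fin K → ℝ) :=
  {r | ∃ ρ : Fin K → ℝ, (∀ k, ρ k ∈ Set.Icc (0 : ℝ) 1) ∧ (∑ k, ρ k) = 1 ∧
    ∀ k, 0 ≤ r k ∧ r k ≤ √(2 / chiRho Wz ρ) * (ρ k * klDiv (Wy (xU {k})) (Wy (xU ∅)))}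

lemma mem_covertRegion_iff {r : Fin K → ℝ} : r ∈ covertRegion Wy Wz ↔
    ∃ ρ ∈ stdSimplex ℝ (Fin K), ∀ k,
      0 ≤ r k ∧ r k ≤ √(2 / chiRho Wz ρ) * (ρ k * klDiv (Wy (xU {k})) (Wy (xU ∅))) :=
  exists_congr fun _ =>
    ⟨fun h => ⟨⟨fun k => (h.1 k).1, h.2.1⟩, h.2.2⟩,
      fun h => ⟨fun k => mem_Icc_of_mem_stdSimplex h.1 k, h.1.2, h.2⟩⟩

lemma isClosed_covertRegion (hχ : ∀ ρ ∈ stdSimplex ℝ (Fin K), 0 < chiRho Wz ρ) :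
    IsClosed (covertRegion Wy Wz) := by
  have hχ' : Continuous fun ρ : stdSimplex ℝ (Fin K) => chiRho Wz ρ :=
    continuous_chiRho.comp continuous_subtype_val
  have hcorner : Continuous fun ρ : stdSimplex ℝ (Fin K) => √(2 / chiRho Wz ρ) :=
    Real.continuous_sqrt.comp (continuous_const.div hχ' fun ρ => (hχ ρ ρ.2).ne')
  have hgraph : IsClosed {q : stdSimplex ℝ (Fin K) × (Fin K → ℝ) | ∀ k, 0 ≤ q.2 k ∧
      q.2 k ≤ √(2 / chiRho Wz q.1) * ((q.1 : Fin K → ℝ) k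
        * klDiv (Wy (xU {k})) (Wy (xU ∅)))} := by
    have hr (k : Fin K) : Continuous fun q : stdSimplex ℝ (Fin K) × (Fin K → ℝ) => q.2 k := by
      fun_prop
    have hρ (k : Fin K) :
        Continuous fun q : stdSimplex ℝ (Fin K) × (Fin K → ℝ) => (q.1 : Fin K → ℝ) k :=
      (continuous_apply k).comp (continuous_subtype_val.comp continuous_fst)
    simp only [Set.ofPred_forall, Set.ofPred_and]
    exact isClosed_iInter fun k => (isClosed_le continuous_const (hr k)).inter
      (isClosed_le (hr k) ((hcorner.comp continuous_fst).mul ((hρ k).mul continuous_const)))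
  convert isClosedMap_snd_of_compactSpace _ hgraph using 1
  ext r
  rw [mem_covertRegion_iff]
  exact ⟨fun ⟨ρ, hρ, hr⟩ => ⟨(⟨ρ, hρ⟩, r), hr, rfl⟩,
    fun ⟨⟨ρ, _⟩, hr, hq⟩ => ⟨ρ, ρ.2, hq ▸ hr⟩⟩

lemma zero_mem_covertRegion [NeZero K] (hWy : ∀ x, IsDist (Wy x))
    (hAC : ∀ k, AbsCont (Wy (xU {k})) (Wy (xU ∅))) : 0 ∈ covertRegion Wy Wz :=
  mem_covertRegion_iff.mpr ⟨Pi.single 0 1, single_mem_stdSimplex ℝ 0, fun k => ⟨le_rfl,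
    mul_nonneg (Real.sqrt_nonneg _) (mul_nonneg ((single_mem_stdSimplex ℝ 0).1 k)
      (klDiv_nonneg (hWy _) (hWy _) (hAC k)))⟩⟩

end Region

/-! ### The converse -/

lemma exists_neg_log_one_sub_add_le {ε : ℝ} (hε : 0 < ε) :
    ∃ ε₀ η : ℝ, 0 < ε₀ ∧ ε₀ < 1 ∧ 0 < η ∧ -Real.log (1 - ε₀) + -Real.log ε₀ * η ≤ ε := by
  have hexp : Real.exp (-(ε / 2)) < 1 := Real.exp_lt_one_iff.mpr (by linarith)
  have hlog : 0 ≤ -Real.log (1 - Real.exp (-(ε / 2))) :=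
    neg_nonneg.mpr (Real.log_nonpos (by linarith) (by linarith [Real.exp_pos (-(ε / 2))]))
  refine ⟨1 - Real.exp (-(ε / 2)), ε / 2 / (-Real.log (1 - Real.exp (-(ε / 2))) + 1),
    by linarith, by linarith [Real.exp_pos (-(ε / 2))], by positivity, ?_⟩
  rw [sub_sub_cancel, Real.log_exp, neg_neg]
  have : -Real.log (1 - Real.exp (-(ε / 2)))
      * (ε / 2 / (-Real.log (1 - Real.exp (-(ε / 2))) + 1)) ≤ ε / 2 := by
    rw [mul_div_left_comm]
    exact mul_le_of_le_one_right (by linarith) ((div_le_one (by linarith)).mpr (by linarith))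
  linarith

/-- With `θ = 3 / (ε log 2)` the slack `log (1 + θ) - log θ ≤ 1 / θ` is a fraction of
`ε log M`. -/
lemma one_sub_mul_log_le_of_error_le {ε p m : ℝ} (hε : 0 < ε) (hm : 2 ≤ m) (hp : p ≤ ε / 3)
    (hpθ : p * Real.log (3 / (ε * Real.log 2)) ≤ ε / 3 * Real.log 2) :
    (1 - ε) * Real.log m ≤ (1 - p) * Real.log (3 / (ε * Real.log 2) * m)
      - Real.log (1 + 3 / (ε * Real.log 2)) := by
  have hlog2 : 0 < Real.log 2 := Real.log_pos one_lt_two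
  set θ : ℝ := 3 / (ε * Real.log 2) with hθ
  have hθ0 : 0 < θ := by positivity
  have hlogm : Real.log 2 ≤ Real.log m := Real.log_le_log two_pos hm
  have hslack : Real.log (1 + θ) ≤ Real.log θ + ε / 3 * Real.log 2 := by
    have hsplit : 1 + θ = θ * (1 + θ⁻¹) := by field_simp; ring
    rw [hsplit, Real.log_mul hθ0.ne' (by positivity)]
    have hinv : θ⁻¹ = ε / 3 * Real.log 2 := by rw [hθ]; field_simp
    linarith [Real.log_le_sub_one_of_pos (show 0 < 1 + θ⁻¹ by positivity)]
  have hpm := mul_le_mul_of_nonneg_right hp (hlog2.le.trans hlogm)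
  have hεm := mul_le_mul_of_nonneg_left hlogm (show 0 ≤ ε / 3 by positivity)
  rw [Real.log_mul hθ0.ne' (by linarith)]
  linarith

lemma le_of_forall_one_sub_mul_le {x y : ℝ}
    (h : ∀ ε > 0, ε < 1 → (1 - ε) * x ≤ y + ε) : x ≤ y := by
  have hx : Tendsto (fun ε : ℝ => (1 - ε) * x) (𝓝[>] 0) (𝓝 ((1 - 0) * x)) :=
    tendsto_nhdsWithin_of_tendsto_nhds (Continuous.tendsto (by fun_prop) 0)
  have hy : Tendsto (fun ε : ℝ => y + ε) (𝓝[>] 0) (𝓝 (y + 0)) :=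
    tendsto_nhdsWithin_of_tendsto_nhds (Continuous.tendsto (by fun_prop) 0)
  have hle := le_of_tendsto_of_tendsto hx hy <| by
    filter_upwards [Ioo_mem_nhdsGT one_pos] with ε hε using h ε hε.1 hε.2
  rwa [sub_zero, one_mul, add_zero] at hle

lemma exists_mem_stdSimplex_tendsto_div_sum {α ι : Type*} [Fintype ι] {l : Ultrafilter α}
    {a : α → ι → ℝ} (ha : ∀ i k, 0 ≤ a i k) (hs : ∀ᶠ i in l, ∑ k, a i k ≠ 0) :
    ∃ ρ ∈ stdSimplex ℝ ι, ∀ k, Tendsto (fun i => a i k / ∑ k, a i k) l (𝓝 (ρ k)) := by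
  obtain ⟨ρ, hρ, hlim⟩ := (isCompact_stdSimplex ℝ ι).ultrafilter_le_nhds
    (l.map fun i k => a i k / ∑ k, a i k) <|
    le_principal_iff.mpr <| mem_map.mpr <| hs.mono fun i hi =>
      ⟨fun k => div_nonneg (ha i k) (sum_nonneg fun k _ => ha i k), by rw [← sum_div, div_self hi]⟩
  exact ⟨ρ, hρ, tendsto_pi_nhds.mp (show Tendsto _ (l : Filter α) (𝓝 ρ) from hlim)⟩

section Converse

variable {K n : ℕ} {M L : Fin K → ℕ} {Y Z : Type*} [Fintype Y] [Fintype Z]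
  {Wy : (Fin K → Bool) → Y → ℝ} {Wz : (Fin K → Bool) → Z → ℝ}

section SingleCode

variable (enc : ∀ k, Fin (M k) × Fin (L k) → Fin n → Bool)

/-- The largest expected number of ones that the users of a code send in one channel use. -/
def peakActivity : ℝ := ⨆ j, ∑ k, activity (letter enc j) k

lemma sum_activity_le_peakActivity (j : Fin n) :
    ∑ k, activity (letter enc j) k ≤ peakActivity enc :=
  le_ciSup (f := fun j => ∑ k, activity (letter enc j) k) (Set.finite_range _).bddAbove j

lemma activity_le_peakActivity (j : Fin n) (k : Fin K) :
    activity (letter enc j) k ≤ peakActivity enc :=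
  (single_le_sum (f := activity (letter enc j)) (fun i _ => activity_nonneg _ i)
    (mem_univ k)).trans (sum_activity_le_peakActivity enc j)

lemma peakActivity_nonneg : 0 ≤ peakActivity enc :=
  Real.iSup_nonneg fun _ => sum_nonneg fun k _ => activity_nonneg _ k

lemma natCast_mul_meanActivity (k : Fin K) :
    n * meanActivity enc k = ∑ j, activity (letter enc j) k := by
  have h := Fintype.card_mul_expect fun j => activity (letter enc j) k
  rwa [Fintype.card_fin] at h

lemma sum_meanActivity_le_peakActivity [NeZero n] :
    ∑ k, meanActivity enc k ≤ peakActivity enc := by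
  simp only [meanActivity, ← expect_sum_comm]
  exact expect_le univ_nonempty fun j _ => sum_activity_le_peakActivity enc j

variable [∀ k, NeZero (M k)] [∀ k, NeZero (L k)]

lemma one_sub_Pe_mul_log_le_meanActivity {k : Fin K} {ε₀ ε θ : ℝ} (hWy : ∀ x, IsDist (Wy x))
    (hAC : AbsCont (Wy (xU {k})) (Wy (xU ∅))) (hε₀ : 0 < ε₀) (hε₀1 : ε₀ < 1) (hθ : 0 < θ)
    (hpeak : -Real.log (1 - ε₀) + -Real.log ε₀ * peakActivity enc ≤ ε)
    (dec : (Fin n → Y) → (∀ k, Fin (L k)) → ∀ k, Fin (M k)) :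
    (1 - Pe Wy M L enc dec) * Real.log (θ * M k) - Real.log (1 + θ) ≤
      n * (meanActivity enc k * klDiv (Wy (xU {k})) (Wy (xU ∅))
        + ε * ∑ i, meanActivity enc i) := by
  refine (one_sub_Pe_mul_log_le hWy hAC hε₀ hε₀1 hθ enc dec).trans ?_
  rw [mul_add, ← mul_assoc, mul_left_comm, mul_sum, sum_congr rfl fun i _ =>
    natCast_mul_meanActivity enc i, natCast_mul_meanActivity, sum_comm, sum_mul, mul_sum,
    ← sum_add_distrib]
  refine sum_le_sum fun j _ => add_le_add_right ?_ _
  rw [mul_comm]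
  have hlog : 0 ≤ -Real.log ε₀ := neg_nonneg.mpr (Real.log_nonpos hε₀.le hε₀1.le)
  have hlog' : 0 ≤ -Real.log (1 - ε₀) :=
    neg_nonneg.mpr (Real.log_nonpos (by linarith) (by linarith))
  have hcoef : -Real.log (1 - ε₀) + -Real.log ε₀ * activity (letter enc j) k ≤ ε := by
    linarith [mul_le_mul_of_nonneg_left (activity_le_peakActivity enc j k) hlog]
  exact mul_le_mul hcoef (sum_le_univ_sum_of_nonneg fun i => activity_nonneg _ i)
    (sum_nonneg fun i _ => activity_nonneg _ i)
    (hcoef.trans' (add_nonneg hlog' (mul_nonneg hlog (activity_nonneg _ k))))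

lemma log_card_div_sqrt_mul_le [NeZero n] {k : Fin K} {ε D : ℝ} (hWz : ∀ x, IsDist (Wz x))
    (hACz : ∀ x, AbsCont (Wz x) (Wz (xU ∅))) (hε : ε ≤ 1) (hs : ∑ i, meanActivity enc i ≠ 0)
    (hM : (1 - ε) * Real.log (M k) ≤
      n * (meanActivity enc k * D + ε * ∑ i, meanActivity enc i)) :
    (1 - ε) * (Real.log (M k) / √(n * deltaN Wz M L enc)
        * √(klDiv (meanOutput enc Wz) (Wz (xU ∅)) / (∑ i, meanActivity enc i) ^ 2))
      ≤ meanActivity enc k / (∑ i, meanActivity enc i) * D + ε := by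
  set s := ∑ i, meanActivity enc i
  set κ := klDiv (meanOutput enc Wz) (Wz (xU ∅)) / s ^ 2 with hκ
  have hs0 : 0 < s := (sum_nonneg fun k _ => meanActivity_nonneg enc k).lt_of_ne' hs
  have hn : (0 : ℝ) < n := Nat.cast_pos.mpr (NeZero.pos n)
  have hsqrt : n * s * √κ ≤ √(n * deltaN Wz M L enc) := by
    rw [← Real.sqrt_sq (show 0 ≤ n * s by positivity), ← Real.sqrt_mul (sq_nonneg _)]
    refine Real.sqrt_le_sqrt ?_
    calc (n * s) ^ 2 * κ = n * (n * klDiv (meanOutput enc Wz) (Wz (xU ∅))) := by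
          rw [hκ]; field_simp
      _ ≤ n * deltaN Wz M L enc :=
          mul_le_mul_of_nonneg_left (mul_klDiv_meanOutput_le_deltaN enc hWz hACz) hn.le
  have hdiv : Real.log (M k) / √(n * deltaN Wz M L enc) * √κ ≤ Real.log (M k) / (n * s) := by
    rw [div_mul_eq_mul_div]
    refine div_le_of_le_mul₀ (Real.sqrt_nonneg _) (by positivity) ?_
    calc Real.log (M k) * √κ = Real.log (M k) / (n * s) * (n * s * √κ) := by field_simp
      _ ≤ _ := mul_le_mul_of_nonneg_left hsqrt (by positivity)
  calc _ ≤ (1 - ε) * (Real.log (M k) / (n * s)) :=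
        mul_le_mul_of_nonneg_left hdiv (sub_nonneg.mpr hε)
    _ ≤ n * (meanActivity enc k * D + ε * s) / (n * s) := by
        rw [← mul_div_assoc]
        exact div_le_div_of_nonneg_right hM (by positivity)
    _ = _ := by field_simp

end SingleCode

section CodeSequence

variable {α : Type*} {l : Filter α} {N : α → ℕ} {M L : α → Fin K → ℕ}
  {enc : ∀ i k, Fin (M i k) × Fin (L i k) → Fin (N i) → Bool}

lemma eq_zero_of_eventually_sum_meanActivity_eq_zero {k : Fin K} {D x : ℝ} {b : α → ℝ} [l.NeBot]
    (hM : ∀ᶠ i in l, (1 - 1 / 2) * Real.log (M i k) ≤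
      N i * (meanActivity (enc i) k * D + 1 / 2 * ∑ k, meanActivity (enc i) k))
    (hs : ∀ᶠ i in l, ∑ k, meanActivity (enc i) k = 0)
    (hx : Tendsto (fun i => Real.log (M i k) / b i) l (𝓝 x)) : x = 0 := by
  refine tendsto_nhds_unique (hx.congr' ?_) tendsto_const_nhds
  filter_upwards [hs, hM] with i hi hle
  have hk := (sum_eq_zero_iff_of_nonneg fun k _ => meanActivity_nonneg (enc i) k).mp hi k
    (mem_univ k)
  rw [hi, hk, zero_mul, mul_zero, add_zero, mul_zero] at hle
  rw [(show Real.log (M i k) = 0 by linarith [Real.log_natCast_nonneg (M i k)]), zero_div]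

variable [∀ i k, NeZero (M i k)] [∀ i k, NeZero (L i k)]

lemma eventually_log_card_le {k : Fin K} {ε : ℝ} (hWy : ∀ x, IsDist (Wy x))
    (hAC : AbsCont (Wy (xU {k})) (Wy (xU ∅)))
    {dec : ∀ i, (Fin (N i) → Y) → (∀ k, Fin (L i k)) → ∀ k, Fin (M i k)}
    (hPe : Tendsto (fun i => Pe Wy (M i) (L i) (enc i) (dec i)) l (𝓝 0))
    (hpeak : Tendsto (fun i => peakActivity (enc i)) l (𝓝 0)) (hε : 0 < ε) :
    ∀ᶠ i in l, (1 - ε) * Real.log (M i k) ≤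
      N i * (meanActivity (enc i) k * klDiv (Wy (xU {k})) (Wy (xU ∅))
        + ε * ∑ k, meanActivity (enc i) k) := by
  obtain ⟨ε₀, η, hε₀, hε₀1, hη, hle⟩ := exists_neg_log_one_sub_add_le hε
  have hPeθ := hPe.mul_const (Real.log (3 / (ε * Real.log 2)))
  rw [zero_mul] at hPeθ
  filter_upwards [hPe.eventually_le_const (show 0 < ε / 3 by positivity),
    hPeθ.eventually_le_const (show 0 < ε / 3 * Real.log 2 by positivity),
    hpeak.eventually_le_const hη] with i hPei hPeθi hpeaki
  rcases (NeZero.one_le (n := M i k)).eq_or_lt with hone | htwo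
  · rw [← hone, Nat.cast_one, Real.log_one, mul_zero]
    exact mul_nonneg (Nat.cast_nonneg _) (add_nonneg (mul_nonneg (meanActivity_nonneg _ k)
      (klDiv_nonneg (hWy _) (hWy _) hAC))
      (mul_nonneg hε.le (sum_nonneg fun k _ => meanActivity_nonneg _ k)))
  · refine (one_sub_mul_log_le_of_error_le hε (by exact_mod_cast htwo) hPei hPeθi).trans
      (one_sub_Pe_mul_log_le_meanActivity (enc i) hWy hAC hε₀ hε₀1 (by positivity) ?_ (dec i))
    have hlog : 0 ≤ -Real.log ε₀ := neg_nonneg.mpr (Real.log_nonpos hε₀.le hε₀1.le)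
    linarith [mul_le_mul_of_nonneg_left hpeaki hlog]

variable [∀ i, NeZero (N i)]

lemma tendsto_peakActivity (hWz : ∀ x, IsDist (Wz x)) (hACz : ∀ x, AbsCont (Wz x) (Wz (xU ∅)))
    (hNC : ¬ IsMixtureOfOthers (fun U : Finset (Fin K) => Wz (xU U)) ∅)
    (hδ : Tendsto (fun i => deltaN Wz (M i) (L i) (enc i)) l (𝓝 0)) :
    Tendsto (fun i => peakActivity (enc i)) l (𝓝 0) := by
  refine tendsto_order.mpr ⟨fun a ha => .of_forall fun i => ha.trans_le (peakActivity_nonneg _),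
    fun a ha => ?_⟩
  obtain ⟨γ, hγ, hthr⟩ := exists_klDiv_outputLaw_threshold hWz hACz hNC
    (show 0 < a / (K + 1) by positivity)
  filter_upwards [hδ.eventually_lt_const hγ] with i hi
  have hsum (j : Fin (N i)) : ∑ k, activity (letter (enc i) j) k ≤ K * (a / (K + 1)) := by
    have hle := sum_le_card_nsmul univ (activity (letter (enc i) j)) _ fun k _ =>
      (hthr _ ((klDiv_outputLaw_le_deltaN (enc i) hWz hACz j).trans_lt hi) k).le
    rwa [card_univ, Fintype.card_fin, nsmul_eq_mul] at hle
  refine (ciSup_le hsum).trans_lt ?_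
  rw [mul_div_left_comm]
  exact mul_lt_of_lt_one_right ha ((div_lt_one (by positivity)).mpr (by linarith))

lemma tendsto_klDiv_meanOutput_div_sq {ρ : Fin K → ℝ} (hWz : ∀ x, IsDist (Wz x))
    (hACz : ∀ x, AbsCont (Wz x) (Wz (xU ∅)))
    (hpeak : Tendsto (fun i => peakActivity (enc i)) l (𝓝 0))
    (hs : ∀ᶠ i in l, ∑ k, meanActivity (enc i) k ≠ 0)
    (hρ : ∀ k, Tendsto (fun i => meanActivity (enc i) k / ∑ k, meanActivity (enc i) k) l
      (𝓝 (ρ k))) :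
    Tendsto (fun i => klDiv (meanOutput (enc i) Wz) (Wz (xU ∅))
      / (∑ k, meanActivity (enc i) k) ^ 2) l (𝓝 (chiRho Wz ρ / 2)) := by
  have hs0 : Tendsto (fun i => ∑ k, meanActivity (enc i) k) l (𝓝 0) :=
    squeeze_zero (fun i => sum_nonneg fun k _ => meanActivity_nonneg _ k)
      (fun i => sum_meanActivity_le_peakActivity (enc i)) hpeak
  have hrem : Tendsto (fun i => 4 * peakActivity (enc i) * (∑ k, meanActivity (enc i) k)
      / ∑ k, meanActivity (enc i) k) l (𝓝 0) := by
    have h4 := hpeak.const_mul 4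
    rw [mul_zero] at h4
    exact h4.congr' (hs.mono fun i hi => (mul_div_cancel_right₀ _ hi).symm)
  exact tendsto_klDiv_div_sq_chiRho (hWz _) (fun i => IsDist.meanOutput (enc i) hWz)
    (fun i => AbsCont.meanOutput (enc i) hACz) hs0 hs hρ hrem fun i z =>
    abs_meanOutput_sub_additive_le (enc i) hWz (sum_activity_le_peakActivity (enc i)) z

/-- Along an ultrafilter the shares of the users in the total activity converge; if the total
activity vanishes, so do the rates. -/
theorem mem_covertRegion_of_tendsto [NeZero K] {l : Ultrafilter α} {r : Fin K → ℝ}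
    (hWy : ∀ x, IsDist (Wy x)) (hWz : ∀ x, IsDist (Wz x))
    (hACy : ∀ k, AbsCont (Wy (xU {k})) (Wy (xU ∅)))
    (hACz : ∀ x, AbsCont (Wz x) (Wz (xU ∅)))
    (hNC : ¬ IsMixtureOfOthers (fun U : Finset (Fin K) => Wz (xU U)) ∅)
    {dec : ∀ i, (Fin (N i) → Y) → (∀ k, Fin (L i k)) → ∀ k, Fin (M i k)}
    (hPe : Tendsto (fun i => Pe Wy (M i) (L i) (enc i) (dec i)) l (𝓝 0))
    (hδ : Tendsto (fun i => deltaN Wz (M i) (L i) (enc i)) l (𝓝 0))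
    (hr : ∀ k, Tendsto (fun i => Real.log (M i k) / √(N i * deltaN Wz (M i) (L i) (enc i))) l
      (𝓝 (r k))) :
    r ∈ covertRegion Wy Wz := by
  have hpeak := tendsto_peakActivity hWz hACz hNC hδ
  have hfano (k : Fin K) {ε : ℝ} (hε : 0 < ε) :=
    eventually_log_card_le hWy (hACy k) hPe hpeak hε
  by_cases hs : ∀ᶠ i in l, ∑ k, meanActivity (enc i) k = 0
  · have hr0 : r = 0 := funext fun k =>
      eq_zero_of_eventually_sum_meanActivity_eq_zero (hfano k one_half_pos) hs (hr k)
    exact hr0 ▸ zero_mem_covertRegion hWy hACy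
  rw [← Ultrafilter.eventually_not] at hs
  obtain ⟨ρ, hρ, hshare⟩ := exists_mem_stdSimplex_tendsto_div_sum
    (fun i => meanActivity_nonneg (enc i)) hs
  have hκ := (tendsto_klDiv_meanOutput_div_sq hWz hACz hpeak hs hshare).sqrt
  have hχ := chiRho_pos hWz hACz hNC hρ
  refine mem_covertRegion_iff.mpr ⟨ρ, hρ, fun k => ⟨ge_of_tendsto' (hr k) fun i =>
    div_nonneg (Real.log_natCast_nonneg _) (Real.sqrt_nonneg _), ?_⟩⟩
  rw [← inv_div, Real.sqrt_inv, le_inv_mul_iff₀ (by positivity), mul_comm]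
  refine le_of_forall_one_sub_mul_le fun ε hε hε1 => ?_
  refine le_of_tendsto_of_tendsto (((hr k).mul hκ).const_mul (1 - ε))
    (((hshare k).mul_const (klDiv (Wy (xU {k})) (Wy (xU ∅)))).add_const ε) ?_
  filter_upwards [hs, hfano k hε] with i hi hle
  exact log_card_div_sqrt_mul_le (enc i) hWz hACz hε1.le hi hle

end CodeSequence

end Converse

/-! ### Random codebooks shared as keys -/

section Codebooks

variable {K n : ℕ} {M : Fin K → ℕ} {β : Type*} [Fintype β]

/-- The number of keys that a user with `m` messages needs for its key to specify a whole codebook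
of words of length `n` over `β`. -/
def codebookCount (β : Type*) [Fintype β] (n m : ℕ) : ℕ := Fintype.card (Fin m → Fin n → β)

/-- The codebook specified by a key. -/
def codebook {m : ℕ} (l : Fin (codebookCount β n m)) : Fin m → Fin n → β :=
  (Fintype.equivFin _).symm l

/-- The encoder of the code in which user `k` sends the word of its message in the codebook given by
its key, read through `X k : β → Bool`. Since keys are uniform, so are the codebooks. -/
def codebookEnc (X : Fin K → β → Bool) (k : Fin K)
    (a : Fin (M k) × Fin (codebookCount β n (M k))) (j : Fin n) : Bool :=
  X k (codebook a.2 a.1 j)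

lemma codebookCount_pos [Nonempty β] (m : ℕ) : 0 < codebookCount β n m := Fintype.card_pos

lemma expect_codebook (G : (∀ k, Fin (M k) → Fin n → β) → ℝ) :
    𝔼 l : ∀ k, Fin (codebookCount β n (M k)), G (fun k => codebook (l k)) = 𝔼 C, G C :=
  Fintype.expect_equiv (Equiv.piCongrRight fun _ => (Fintype.equivFin _).symm) _ _ fun _ => rfl

lemma expect_prod_letters (f : Fin n → (Fin K → β) → ℝ) :
    𝔼 e : Fin K → Fin n → β, ∏ j, f j (fun k => e k j) = ∏ j, 𝔼 b, f j b := by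
  rw [← expect_pi_prod]
  exact Fintype.expect_equiv (Equiv.piComm _) _ _ fun _ => rfl

variable [Nonempty β]

lemma expect_codewords (m : ∀ k, Fin (M k)) (G : (Fin K → Fin n → β) → ℝ) :
    𝔼 C : ∀ k, Fin (M k) → Fin n → β, G (fun k => C k (m k)) = 𝔼 e, G e :=
  expect_pi_map (π := fun k (c : Fin (M k) → Fin n → β) => c (m k))
    (fun k => expect_pi_eval (Ω := fun _ => Fin n → β) (m k)) G

lemma expect_codebooks_update (k : Fin K) (i : Fin (M k))
    (H : (∀ k, Fin (M k) → Fin n → β) → ℝ) :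
    𝔼 C, 𝔼 c, H (Function.update C k (Function.update (C k) i c)) = 𝔼 C, H C := by
  rw [← expect_pi_update k fun C => 𝔼 c, H (Function.update C k (Function.update (C k) i c)),
    ← expect_pi_update k H]
  simp only [Function.update_self, Function.update_idem]
  refine expect_congr rfl fun C _ => ?_
  exact expect_pi_update i fun D => H (Function.update C k D)

variable (X : Fin K → β → Bool)

lemma expect_codebooks_sum_prod {Y : Type*} [Fintype Y] (m : ∀ k, Fin (M k))
    (f : (Fin K → Bool) → Y → ℝ) :
    𝔼 C : ∀ k, Fin (M k) → Fin n → β, ∑ y : Fin n → Y, ∏ j, f (fun k => X k (C k (m k) j)) (y j)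
      = (𝔼 b : Fin K → β, ∑ y, f (fun k => X k (b k)) y) ^ n := by
  have hsum (x : Fin n → Fin K → Bool) :
      ∑ y : Fin n → Y, ∏ j, f (x j) (y j) = ∏ j, ∑ y, f (x j) y := by
    rw [prod_univ_sum, Fintype.piFinset_univ]
  simp only [hsum]
  rw [expect_codewords m fun e => ∏ j, ∑ y, f (fun k => X k (e k j)) y,
    expect_prod_letters fun _ b => ∑ y, f (fun k => X k (b k)) y, prod_const, card_univ,
    Fintype.card_fin]

variable [∀ k, NeZero (M k)]

lemma Qhat_codebookEnc {Z : Type*} [Fintype Z] (W : (Fin K → Bool) → Z → ℝ) :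
    Qhat W M (fun k => codebookCount β n (M k)) (codebookEnc X)
      = fun z => ∏ j, outputLaw W X (z j) := by
  funext z
  rw [Qhat_eq_expect]
  refine (expect_pi_prodMk (Ω := fun k => Fin (M k)) _).trans ?_
  refine (expect_congr rfl fun m _ => ?_).trans (Fintype.expect_const _)
  refine (expect_codebook fun C => ∏ j, W (fun k => X k (C k (m k) j)) (z j)).trans ?_
  rw [expect_codewords m fun e => ∏ j, W (fun k => X k (e k j)) (z j),
    expect_prod_letters fun j b => W (fun k => X k (b k)) (z j)]
  rfl

lemma deltaN_codebookEnc {Z : Type*} [Fintype Z] {W : (Fin K → Bool) → Z → ℝ}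
    (hW : ∀ x, IsDist (W x)) (hAC : ∀ x, AbsCont (W x) (W (xU ∅))) :
    deltaN W M (fun k => codebookCount β n (M k)) (codebookEnc X)
      = n * klDiv (outputLaw W X) (W (xU ∅)) := by
  rw [deltaN, Qhat_codebookEnc, klDiv_pi (fun _ => IsDist.outputLaw X hW)
    fun _ => AbsCont.expect fun _ => hAC _, sum_const, card_univ, Fintype.card_fin, nsmul_eq_mul]

end Codebooks

/-! ### Threshold decoding -/

section ThresholdDecoding

/-- Some candidate whose score is at least the threshold `θ`, or an arbitrary candidate if there is
none. -/
def thresholdDecode {α : Type*} [Nonempty α] (θ : ℝ) (score : α → ℝ) : α :=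
  Classical.epsilon fun i => θ ≤ score i

lemma ite_thresholdDecode_le {α : Type*} [Nonempty α] [Fintype α] [DecidableEq α] {θ s : ℝ}
    {score : α → ℝ} {i : α} (hθ : 0 < θ) (hs : 0 ≤ s) (hscore : ∀ i', 0 ≤ score i')
    (hi : 0 < score i) :
    (if thresholdDecode θ score = i then (0 : ℝ) else 1)
      ≤ θ ^ s * score i ^ (-s) + ∑ i' ∈ univ.erase i, score i' / θ := by
  have hfalse i' : 0 ≤ score i' / θ := div_nonneg (hscore i') hθ.le
  split_ifs with h
  · exact add_nonneg (by positivity) (sum_nonneg fun i' _ => hfalse i')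
  rcases le_or_gt θ (score i) with hpass | hmiss
  · have hdec : θ ≤ score (thresholdDecode θ score) :=
      Classical.epsilon_spec (p := fun i' => θ ≤ score i') ⟨i, hpass⟩
    calc (1 : ℝ) ≤ score (thresholdDecode θ score) / θ := (one_le_div hθ).mpr hdec
      _ ≤ ∑ i' ∈ univ.erase i, score i' / θ :=
        single_le_sum (fun i' _ => hfalse i') (mem_erase.mpr ⟨h, mem_univ _⟩)
      _ ≤ _ := le_add_of_nonneg_left (by positivity)
  · calc (1 : ℝ) ≤ (θ / score i) ^ s := Real.one_le_rpow ((one_le_div hi).mpr hmiss.le) hs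
      _ = θ ^ s * score i ^ (-s) := by
        rw [Real.div_rpow hθ.le hi.le, Real.rpow_neg hi.le, div_eq_mul_inv]
      _ ≤ _ := le_add_of_nonneg_right (sum_nonneg fun i' _ => hfalse i')

variable {K : ℕ} {Y : Type*} (W : (Fin K → Bool) → Y → ℝ)

/-- The likelihood ratio of one channel use when only user `k` may be active, with input `x`,
against the use in which all users are inactive, shifted by `ε` when `x` is a one. The shift keeps
the ratio positive at outputs that only a collision of several active users can produce. -/
def likelihoodRatio (ε : ℝ) (k : Fin K) (x : Bool) (y : Y) : ℝ :=
  if x then W (xU {k}) y / W (xU ∅) y + ε else 1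

variable {n : ℕ} {M : Fin K → ℕ} [∀ k, NeZero (M k)] {β : Type*} (X : Fin K → β → Bool)

/-- The decoder that tests each user's codewords separately, by thresholding the likelihood ratio
of user `k`, with shift `ε k`, at `θ k`. -/
def ratioDecode (ε θ : Fin K → ℝ) (y : Fin n → Y) (C : ∀ k, Fin (M k) → Fin n → β) (k : Fin K) :
    Fin (M k) :=
  thresholdDecode (θ k) fun i => ∏ j, likelihoodRatio W (ε k) k (X k (C k i j)) (y j)

variable {W}

lemma likelihoodRatio_pos [Fintype Y] (hW : ∀ x, IsDist (W x)) {ε : ℝ} (hε : 0 < ε) (k : Fin K)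
    (x : Bool) (y : Y) : 0 < likelihoodRatio W ε k x y := by
  unfold likelihoodRatio
  split_ifs
  · exact add_pos_of_nonneg_of_pos (div_nonneg ((hW _).1 y) ((hW _).1 y)) hε
  · exact zero_lt_one

lemma ite_ratioDecode_le [Fintype Y] (hW : ∀ x, IsDist (W x)) {ε θ s : Fin K → ℝ}
    (hε : ∀ k, 0 < ε k) (hθ : ∀ k, 0 < θ k) (hs : ∀ k, 0 ≤ s k) (m : ∀ k, Fin (M k))
    (C : ∀ k, Fin (M k) → Fin n → β) (y : Fin n → Y) :
    (if ratioDecode W X ε θ y C = m then (0 : ℝ) else 1)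
      ≤ ∑ k with M k ≠ 1, (θ k ^ s k
          * ∏ j, likelihoodRatio W (ε k) k (X k (C k (m k) j)) (y j) ^ (-s k)
        + ∑ i ∈ univ.erase (m k),
            (∏ j, likelihoodRatio W (ε k) k (X k (C k i j)) (y j)) / θ k) := by
  have huser k : (if ratioDecode W X ε θ y C k = m k then (0 : ℝ) else 1) ≤ θ k ^ s k
          * ∏ j, likelihoodRatio W (ε k) k (X k (C k (m k) j)) (y j) ^ (-s k)
        + ∑ i ∈ univ.erase (m k), (∏ j, likelihoodRatio W (ε k) k (X k (C k i j)) (y j)) / θ k := by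
    have hpos i : 0 < ∏ j, likelihoodRatio W (ε k) k (X k (C k i j)) (y j) :=
      prod_pos fun j _ => likelihoodRatio_pos hW (hε k) k _ _
    rw [Real.finsetProd_rpow _ _ fun j _ => (likelihoodRatio_pos hW (hε k) k _ _).le]
    exact ite_thresholdDecode_le (hθ k) (hs k) (fun i => (hpos i).le) (hpos (m k))
  refine le_trans ?_ (sum_le_sum fun k _ => huser k)
  have hnonneg k : (0 : ℝ) ≤ if ratioDecode W X ε θ y C k = m k then 0 else 1 := by
    split_ifs <;> norm_num
  split_ifs with h
  · exact sum_nonneg fun k _ => hnonneg k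
  obtain ⟨k, hk⟩ := Function.ne_iff.mp h
  have hMk : M k ≠ 1 := by
    intro hMk
    have : Subsingleton (Fin (M k)) := hMk ▸ inferInstance
    exact hk (Subsingleton.elim _ _)
  calc (1 : ℝ) = if ratioDecode W X ε θ y C k = m k then 0 else 1 := (if_neg hk).symm
    _ ≤ _ := single_le_sum (f := fun k => if ratioDecode W X ε θ y C k = m k then (0 : ℝ) else 1)
      (fun k _ => hnonneg k) (mem_filter.mpr ⟨mem_univ _, hMk⟩)

lemma prod_mul_ite_ratioDecode_le [Fintype Y] (hW : ∀ x, IsDist (W x)) {ε θ s : Fin K → ℝ}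
    (hε : ∀ k, 0 < ε k) (hθ : ∀ k, 0 < θ k) (hs : ∀ k, 0 ≤ s k) (m : ∀ k, Fin (M k))
    (C : ∀ k, Fin (M k) → Fin n → β) (y : Fin n → Y) :
    (∏ j, W (fun k => X k (C k (m k) j)) (y j)) * (if ratioDecode W X ε θ y C = m then 0 else 1)
      ≤ ∑ k with M k ≠ 1, (θ k ^ s k * ((∏ j, W (fun k => X k (C k (m k) j)) (y j))
          * ∏ j, likelihoodRatio W (ε k) k (X k (C k (m k) j)) (y j) ^ (-s k))
        + ∑ i ∈ univ.erase (m k), (∏ j, W (fun k => X k (C k (m k) j)) (y j))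
          * (∏ j, likelihoodRatio W (ε k) k (X k (C k i j)) (y j)) / θ k) := by
  refine (mul_le_mul_of_nonneg_left (ite_ratioDecode_le X hW hε hθ hs m C y)
    (prod_nonneg fun j _ => (hW _).1 _)).trans_eq ?_
  simp only [mul_sum, mul_add, mul_left_comm, mul_div_assoc]

end ThresholdDecoding

section RatioDecoding

variable {K n : ℕ} {M : Fin K → ℕ} {β : Type*} [Fintype β] {Y : Type*}
  [Fintype Y]

/-- The `(-s)`-th moment of the likelihood ratio of user `k` at its own input letter. -/
def ratioMoment (W : (Fin K → Bool) → Y → ℝ) (ε : ℝ) (k : Fin K) (s : ℝ)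
    (x : Fin K → Bool) : ℝ :=
  ∑ y, W x y * likelihoodRatio W ε k (x k) y ^ (-s)

/-- The Chernoff factor, with exponent `s`, by which each channel use reduces the probability that
the likelihood ratio of the word sent by user `k` is small. -/
def missFactor (W : (Fin K → Bool) → Y → ℝ) (X : Fin K → β → Bool) (ε : ℝ) (k : Fin K)
    (s : ℝ) : ℝ :=
  𝔼 b : Fin K → β, ratioMoment W ε k s fun k => X k (b k)

/-- The mean likelihood ratio of user `k`, per channel use, at a letter that was not sent. -/
def falseAlarmFactor (W : (Fin K → Bool) → Y → ℝ) (X : Fin K → β → Bool) (ε : ℝ) (k : Fin K) : ℝ :=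
  𝔼 b : Fin K → β, ∑ y, W (fun k => X k (b k)) y * 𝔼 a, likelihoodRatio W ε k (X k a) y

variable {W : (Fin K → Bool) → Y → ℝ} (X : Fin K → β → Bool)

lemma missFactor_nonneg (hW : ∀ x, IsDist (W x)) {ε : ℝ} (hε : 0 < ε) (k : Fin K) (s : ℝ) :
    0 ≤ missFactor W X ε k s :=
  expect_nonneg fun _ _ => sum_nonneg fun y _ => mul_nonneg ((hW _).1 y)
    (Real.rpow_nonneg (likelihoodRatio_pos hW hε k _ y).le _)

lemma falseAlarmFactor_nonneg (hW : ∀ x, IsDist (W x)) {ε : ℝ} (hε : 0 < ε) (k : Fin K) :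
    0 ≤ falseAlarmFactor W X ε k :=
  expect_nonneg fun _ _ => sum_nonneg fun y _ => mul_nonneg ((hW _).1 y)
    (expect_nonneg fun _ _ => (likelihoodRatio_pos hW hε k _ y).le)

variable (W) [Nonempty β]

lemma expect_codebooks_miss (m : ∀ k, Fin (M k)) (ε : ℝ) (k : Fin K) (s : ℝ) :
    𝔼 C : ∀ k, Fin (M k) → Fin n → β, ∑ y : Fin n → Y,
        (∏ j, W (fun k => X k (C k (m k) j)) (y j))
          * ∏ j, likelihoodRatio W ε k (X k (C k (m k) j)) (y j) ^ (-s)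
      = missFactor W X ε k s ^ n := by
  simp only [← prod_mul_distrib]
  exact expect_codebooks_sum_prod X m fun x y => W x y * likelihoodRatio W ε k (x k) y ^ (-s)

lemma expect_codebooks_falseAlarm (m : ∀ k, Fin (M k)) (ε : ℝ) {k : Fin K} {i : Fin (M k)}
    (hi : i ≠ m k) :
    𝔼 C : ∀ k, Fin (M k) → Fin n → β, ∑ y : Fin n → Y,
        (∏ j, W (fun k => X k (C k (m k) j)) (y j))
          * ∏ j, likelihoodRatio W ε k (X k (C k i j)) (y j)
      = falseAlarmFactor W X ε k ^ n := by
  have hsent (C : ∀ k, Fin (M k) → Fin n → β) (c : Fin n → β) (k' : Fin K) :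
      Function.update C k (Function.update (C k) i c) k' (m k') = C k' (m k') := by
    rcases eq_or_ne k' k with rfl | hk
    · rw [Function.update_self, Function.update_of_ne hi.symm]
    · rw [Function.update_of_ne hk]
  have hprod (y : Fin n → Y) : 𝔼 c : Fin n → β, ∏ j, likelihoodRatio W ε k (X k (c j)) (y j)
      = ∏ j, 𝔼 a, likelihoodRatio W ε k (X k a) (y j) :=
    expect_pi_prod fun j a => likelihoodRatio W ε k (X k a) (y j)
  rw [← expect_codebooks_update k i]
  simp only [hsent, Function.update_self, expect_sum_comm, ← mul_expect, hprod]
  simp only [← expect_sum_comm, ← prod_mul_distrib]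
  exact expect_codebooks_sum_prod X m fun x y => W x y * 𝔼 a, likelihoodRatio W ε k (X k a) y

lemma expect_codebooks_error (m : ∀ k, Fin (M k)) (S : Finset (Fin K)) (ε θ s : Fin K → ℝ) :
    𝔼 C : ∀ k, Fin (M k) → Fin n → β, ∑ y : Fin n → Y, ∑ k ∈ S,
        (θ k ^ s k * ((∏ j, W (fun k => X k (C k (m k) j)) (y j))
          * ∏ j, likelihoodRatio W (ε k) k (X k (C k (m k) j)) (y j) ^ (-s k))
        + ∑ i ∈ univ.erase (m k), (∏ j, W (fun k => X k (C k (m k) j)) (y j))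
          * (∏ j, likelihoodRatio W (ε k) k (X k (C k i j)) (y j)) / θ k)
      = ∑ k ∈ S, (θ k ^ s k * missFactor W X (ε k) k (s k) ^ n
        + ∑ _i ∈ univ.erase (m k), falseAlarmFactor W X (ε k) k ^ n / θ k) := by
  simp only [expect_sum_comm, expect_add_distrib, ← mul_expect, ← expect_div]
  rw [sum_comm]
  refine sum_congr rfl fun k _ => ?_
  rw [sum_add_distrib, ← mul_sum, ← expect_sum_comm, expect_codebooks_miss, sum_comm]
  refine congrArg _ (sum_congr rfl fun i hi => ?_)
  rw [← sum_div, ← expect_sum_comm, expect_codebooks_falseAlarm W X m _ (ne_of_mem_erase hi)]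

variable {W} [∀ k, NeZero (M k)]

lemma Pe_ratioDecode_le (hW : ∀ x, IsDist (W x)) {ε θ s : Fin K → ℝ} (hε : ∀ k, 0 < ε k)
    (hθ : ∀ k, 0 < θ k) (hs : ∀ k, 0 ≤ s k) :
    Pe W M (fun k => codebookCount β n (M k)) (codebookEnc X)
        (fun y l => ratioDecode W X ε θ y fun k => codebook (l k))
      ≤ ∑ k with M k ≠ 1, (θ k ^ s k * missFactor W X (ε k) k (s k) ^ n
          + M k / θ k * falseAlarmFactor W X (ε k) k ^ n) := by
  rw [Pe_eq_expect]
  refine expect_le univ_nonempty fun m _ => ?_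
  calc _ = 𝔼 C : ∀ k, Fin (M k) → Fin n → β, ∑ y : Fin n → Y,
        (∏ j, W (fun k => X k (C k (m k) j)) (y j))
          * if ratioDecode W X ε θ y C = m then 0 else 1 :=
        expect_codebook fun C => ∑ y : Fin n → Y, (∏ j, W (fun k => X k (C k (m k) j)) (y j))
          * if ratioDecode W X ε θ y C = m then 0 else 1
    _ ≤ _ := expect_le_expect fun C _ => sum_le_sum fun y _ =>
        prod_mul_ite_ratioDecode_le X hW hε hθ hs m C y
    _ = _ := expect_codebooks_error W X m _ ε θ s
    _ ≤ _ := by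
        refine sum_le_sum fun k _ => add_le_add le_rfl ?_
        have hcount : (#(univ.erase (m k)) : ℝ) ≤ M k := by
          exact_mod_cast card_erase_le.trans_eq (card_fin _)
        rw [sum_const, nsmul_eq_mul, mul_div_assoc', div_mul_eq_mul_div]
        exact div_le_div_of_nonneg_right (mul_le_mul_of_nonneg_right hcount
          (pow_nonneg (falseAlarmFactor_nonneg X hW (hε k) k) n)) (hθ k).le

end RatioDecoding

section FactorBounds

variable {K : ℕ} {Y : Type*} [Fintype Y] {W : (Fin K → Bool) → Y → ℝ} {ε : ℝ}

lemma ratioMoment_of_not (hW : ∀ x, IsDist (W x)) {k : Fin K} (s : ℝ) {x : Fin K → Bool}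
    (hx : x k = false) : ratioMoment W ε k s x = 1 := by
  simp only [ratioMoment, likelihoodRatio, hx, Bool.false_eq_true, if_false, Real.one_rpow, mul_one,
    (hW x).2]

lemma ratioMoment_zero (hW : ∀ x, IsDist (W x)) (k : Fin K) (x : Fin K → Bool) :
    ratioMoment W ε k 0 x = 1 := by
  simp only [ratioMoment, neg_zero, Real.rpow_zero, mul_one, (hW x).2]

lemma hasDerivAt_ratioMoment (hW : ∀ x, IsDist (W x)) (hε : 0 < ε) (k : Fin K) :
    HasDerivAt (fun s => ratioMoment W ε k s (xU {k}))
      (-∑ y, W (xU {k}) y * Real.log (W (xU {k}) y / W (xU ∅) y + ε)) 0 := by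
  rw [← sum_neg_distrib]
  refine HasDerivAt.fun_sum fun y _ => ?_
  have hx : xU {k} k = true := by simp [xU]
  have hpos : 0 < W (xU {k}) y / W (xU ∅) y + ε :=
    add_pos_of_nonneg_of_pos (div_nonneg ((hW _).1 y) ((hW _).1 y)) hε
  have h := ((hasDerivAt_id (0 : ℝ)).neg.const_rpow hpos).const_mul (W (xU {k}) y)
  simpa [likelihoodRatio, hx] using h

lemma klDiv_le_sum_mul_log_div_add {α : Type*} [Fintype α] {P Q : α → ℝ} (hP : ∀ y, 0 ≤ P y)
    (hQ : ∀ y, 0 ≤ Q y) (hPQ : AbsCont P Q) (hε : 0 ≤ ε) :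
    klDiv P Q ≤ ∑ y, P y * Real.log (P y / Q y + ε) := by
  refine sum_le_sum fun y _ => ?_
  rcases eq_or_ne (P y) 0 with h0 | h0
  · simp only [h0, zero_mul, le_refl]
  have hpos : 0 < P y / Q y := div_pos ((hP y).lt_of_ne' h0) ((hQ y).lt_of_ne' (mt (hPQ y) h0))
  gcongr
  · exact hP y
  · exact le_add_of_nonneg_right hε

lemma exists_mul_add_mul_ratioMoment_neg (hW : ∀ x, IsDist (W x)) {k : Fin K}
    (hAC : AbsCont (W (xU {k})) (W (xU ∅))) (hε : 0 < ε) {t ρ : ℝ} (hρ : 0 ≤ ρ)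
    (ht : t < ρ * klDiv (W (xU {k})) (W (xU ∅))) :
    ∃ s ≥ 0, s * t + ρ * (ratioMoment W ε k s (xU {k}) - 1) < 0 := by
  have hderiv : HasDerivAt (fun s => s * t + ρ * (ratioMoment W ε k s (xU {k}) - 1))
      (1 * t + ρ * -∑ y, W (xU {k}) y * Real.log (W (xU {k}) y / W (xU ∅) y + ε)) 0 :=
    ((hasDerivAt_id 0).mul_const t).add
      (((hasDerivAt_ratioMoment hW hε k).sub_const 1).const_mul ρ)
  have hneg : 1 * t + ρ * -∑ y, W (xU {k}) y * Real.log (W (xU {k}) y / W (xU ∅) y + ε) < 0 := by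
    linarith [mul_le_mul_of_nonneg_left
      (klDiv_le_sum_mul_log_div_add (hW _).1 (hW _).1 hAC hε.le) hρ]
  have hslope := (hasDerivAt_iff_tendsto_slope.mp hderiv).mono_left (nhdsGT_le_nhdsNE 0)
  obtain ⟨s, hs, hs0⟩ := ((hslope.eventually_lt_const hneg).and
    self_mem_nhdsWithin).exists
  have hs0 : 0 < s := hs0
  refine ⟨s, hs0.le, ?_⟩
  simpa [slope_def_field, ratioMoment_zero hW, div_lt_iff₀ hs0] using hs

variable {β : Type*} [Fintype β] [Nonempty β] (X : Fin K → β → Bool)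

lemma missFactor_le (hW : ∀ x, IsDist (W x)) {k : Fin K} {s B : ℝ}
    (hB : ∀ x, |ratioMoment W ε k s x| ≤ B) :
    missFactor W X ε k s ≤ 1 + activity X k * (ratioMoment W ε k s (xU {k}) - 1)
      + 4 * B * (∑ k, activity X k) ^ 2 := by
  have h := abs_expect_sub_additive_le X hB
  rw [ratioMoment_of_not hW s (x := xU ∅) (by simp [xU]), sum_eq_single k] at h
  · unfold missFactor
    linarith [le_of_abs_le h]
  · intro i _ hik
    rw [ratioMoment_of_not hW s (by simp [xU, hik.symm]), sub_self, mul_zero]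
  · simp

lemma falseAlarmFactor_eq (hW : ∀ x, IsDist (W x)) (ε : ℝ) (k : Fin K) :
    falseAlarmFactor W X ε k = 1 + activity X k * (𝔼 b : Fin K → β,
      ∑ y, W (fun k => X k (b k)) y * (W (xU {k}) y / W (xU ∅) y + ε) - 1) := by
  have hratio y : 𝔼 a, likelihoodRatio W ε k (X k a) y
      = 1 + activity X k * (W (xU {k}) y / W (xU ∅) y + ε - 1) := by
    have h a : likelihoodRatio W ε k (X k a) y
        = 1 + (if X k a then 1 else 0) * (W (xU {k}) y / W (xU ∅) y + ε - 1) := by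
      unfold likelihoodRatio
      split_ifs <;> ring
    simp only [h, expect_add_distrib, Fintype.expect_const, ← expect_mul, activity]
  have hsum x : ∑ y, W x y * (1 + activity X k * (W (xU {k}) y / W (xU ∅) y + ε - 1))
      = 1 + activity X k * (∑ y, W x y * (W (xU {k}) y / W (xU ∅) y + ε) - 1) := by
    simp only [mul_one_add, mul_left_comm _ (activity X k), sum_add_distrib, ← mul_sum, (hW x).2]
    simp only [mul_sub_one, sum_sub_distrib, (hW x).2]
  simp only [falseAlarmFactor, hratio, hsum, expect_add_distrib, expect_sub_distrib,
    Fintype.expect_const, ← mul_expect]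

lemma falseAlarmFactor_le (hW : ∀ x, IsDist (W x)) {k : Fin K}
    (hAC : AbsCont (W (xU {k})) (W (xU ∅))) (hε : 0 ≤ ε) {B : ℝ}
    (hB : ∀ x, |∑ y, W x y * (W (xU {k}) y / W (xU ∅) y + ε)| ≤ B) :
    falseAlarmFactor W X ε k
      ≤ 1 + (activity X k * ε + 5 * B * (∑ k, activity X k) ^ 2) := by
  have hp0 := activity_nonneg X
  have hpμ : activity X k ≤ ∑ k, activity X k :=
    single_le_sum (fun i _ => hp0 i) (mem_univ k)
  have hempty : ∑ y, W (xU ∅) y * (W (xU {k}) y / W (xU ∅) y + ε) = 1 + ε := by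
    simp only [mul_add, sum_add_distrib, (hW _).sum_mul_const, mul_div_cancel_of_imp' (hAC _),
      (hW _).2]
  have hB0 : 0 ≤ B := (abs_nonneg _).trans (hB (xU ∅))
  have hlin : ∑ i, activity X i
        * (∑ y, W (xU {i}) y * (W (xU {k}) y / W (xU ∅) y + ε) - (1 + ε))
      ≤ B * ∑ i, activity X i := by
    rw [mul_sum]
    refine sum_le_sum fun i _ => (mul_comm _ _).trans_le (mul_le_mul_of_nonneg_right ?_ (hp0 i))
    linarith [le_of_abs_le (hB (xU {i}))]
  have hF := le_of_abs_le (abs_expect_sub_additive_le X hB)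
  rw [hempty] at hF
  rw [falseAlarmFactor_eq X hW]
  calc _ ≤ 1 + activity X k
        * (ε + B * ∑ i, activity X i + 4 * B * (∑ i, activity X i) ^ 2) := by
        gcongr
        · exact hp0 k
        · linarith
    _ = 1 + (activity X k * ε + (B * (activity X k * ∑ i, activity X i)
        + activity X k * (4 * B * (∑ i, activity X i) ^ 2))) := by ring
    _ ≤ 1 + (activity X k * ε + (B * ((∑ i, activity X i) * ∑ i, activity X i)
        + 1 * (4 * B * (∑ i, activity X i) ^ 2))) := by
        gcongr
        · exact (hp0 k).trans hpμ
        · exact activity_le_one X k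
    _ = 1 + (activity X k * ε + 5 * B * (∑ i, activity X i) ^ 2) := by ring

end FactorBounds

/-! ### Achievability -/

section Asymptotics

lemma tendsto_mul_pow_zero {a g b e w : ℕ → ℝ} {ℓ : ℝ} (hw : Tendsto w atTop atTop)
    (ha0 : ∀ n, 0 ≤ a n) (ha : ∀ n, a n ≤ Real.exp (w n * b n)) (hg0 : ∀ n, 0 ≤ g n)
    (hg : ∀ n, g n ≤ 1 + e n) (hlim : Tendsto (fun n => b n + n * e n / w n) atTop (𝓝 ℓ))
    (hℓ : ℓ < 0) : Tendsto (fun n => a n * g n ^ n) atTop (𝓝 0) := by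
  have hexp := Real.tendsto_exp_atBot.comp (hw.atTop_mul_neg hℓ hlim)
  refine squeeze_zero' (Eventually.of_forall fun n => mul_nonneg (ha0 n) (pow_nonneg (hg0 n) n))
    ?_ hexp
  filter_upwards [hw.eventually_gt_atTop 0] with n hwn
  calc a n * g n ^ n ≤ Real.exp (w n * b n) * Real.exp (e n) ^ n := by
        have hge : g n ≤ Real.exp (e n) := by linarith [hg n, Real.add_one_le_exp (e n)]
        exact mul_le_mul (ha n) (pow_le_pow_left₀ (hg0 n) hge n) (pow_nonneg (hg0 n) n)
          (Real.exp_pos _).le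
    _ = Real.exp (w n * (b n + n * e n / w n)) := by
        rw [← Real.exp_nat_mul, ← Real.exp_add]
        congr 1
        field

lemma tendsto_log_floor_exp_div {w : ℕ → ℝ} (hw : Tendsto w atTop atTop) {c : ℝ} (hc : 0 ≤ c) :
    Tendsto (fun n => Real.log (⌊Real.exp (c * w n)⌋₊ : ℝ) / w n) atTop (𝓝 c) := by
  have hlower : Tendsto (fun n => c - Real.log 2 / w n) atTop (𝓝 c) := by
    simpa only [sub_zero] using (hw.const_div_atTop (Real.log 2)).const_sub c
  refine tendsto_of_tendsto_of_tendsto_of_le_of_le' hlower tendsto_const_nhds ?_ ?_ <;>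
    filter_upwards [hw.eventually_gt_atTop 0] with n hwn
  · have hone : 1 ≤ Real.exp (c * w n) := Real.one_le_exp (by positivity)
    have hfloor : (1 : ℝ) ≤ ⌊Real.exp (c * w n)⌋₊ := by
      exact_mod_cast Nat.one_le_floor_iff _ |>.mpr hone
    have hhalf : Real.exp (c * w n) / 2 ≤ ⌊Real.exp (c * w n)⌋₊ := by
      linarith [Nat.lt_floor_add_one (Real.exp (c * w n))]
    have hlog := Real.log_le_log (by positivity) hhalf
    rw [Real.log_div (Real.exp_ne_zero _) two_ne_zero, Real.log_exp] at hlog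
    rw [le_div_iff₀ hwn, sub_mul, div_mul_cancel₀ _ hwn.ne']
    exact hlog
  · have hfloor : (0 : ℝ) < ⌊Real.exp (c * w n)⌋₊ := by
      exact_mod_cast Nat.floor_pos.mpr (Real.one_le_exp (by positivity))
    rw [div_le_iff₀ hwn]
    exact (Real.log_le_iff_le_exp hfloor).mpr (Nat.floor_le (Real.exp_pos _).le)

variable {K : ℕ} {β : ℕ → Type*} [∀ n, Fintype (β n)]
  {X : ∀ n, Fin K → β n → Bool} {w : ℕ → ℝ} {ρ : Fin K → ℝ}

lemma tendsto_mul_sum_activity_sq_div (hw : Tendsto w atTop atTop)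
    (hwn : Tendsto (fun n => w n ^ 2 / n) atTop (𝓝 0))
    (hp : ∀ k, Tendsto (fun n => n * activity (X n) k / w n) atTop (𝓝 (ρ k))) :
    Tendsto (fun n => n * (∑ k, activity (X n) k) ^ 2 / w n) atTop (𝓝 0) := by
  have hμ : Tendsto (fun n => ∑ k, n * activity (X n) k / w n) atTop (𝓝 (∑ k, ρ k)) :=
    tendsto_finsetSum _ fun k _ => hp k
  have h := ((hμ.pow 2).mul hwn).mul (tendsto_inv_atTop_zero.comp hw)
  simp only [mul_zero] at h
  refine h.congr' ?_
  filter_upwards [hw.eventually_gt_atTop 0] with n hw0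
  rw [← sum_div, ← mul_sum]
  simp only [Function.comp_apply]
  field

section Decoding

variable [∀ n, Nonempty (β n)] {Y : Type*} [Fintype Y] {W : (Fin K → Bool) → Y → ℝ}
  {ε : ℝ}

lemma tendsto_rpow_mul_missFactor_pow (hW : ∀ x, IsDist (W x)) (hε : 0 < ε)
    (hw : Tendsto w atTop atTop)
    (hwn : Tendsto (fun n => w n ^ 2 / n) atTop (𝓝 0))
    (hp : ∀ k, Tendsto (fun n => n * activity (X n) k / w n) atTop (𝓝 (ρ k)))
    {k : Fin K} {s t : ℝ} (hst : s * t + ρ k * (ratioMoment W ε k s (xU {k}) - 1) < 0) :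
    Tendsto (fun n => Real.exp (t * w n) ^ s * missFactor W (X n) ε k s ^ n) atTop (𝓝 0) := by
  obtain ⟨B, hB⟩ := (Set.finite_range fun x => |ratioMoment W ε k s x|).bddAbove
  refine tendsto_mul_pow_zero (b := fun _ => s * t) hw (fun n => by positivity)
    (fun n => by rw [← Real.exp_mul]; exact (congrArg _ (by ring)).le)
    (fun n => missFactor_nonneg _ hW hε k s)
    (fun n => (missFactor_le (X n) hW fun x => hB ⟨x, rfl⟩).trans_eq (add_assoc _ _ _)) ?_ hst
  have h := (((hp k).mul_const (ratioMoment W ε k s (xU {k}) - 1)).add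
    ((tendsto_mul_sum_activity_sq_div hw hwn hp).const_mul (4 * B))).const_add (s * t)
  rw [mul_zero, add_zero] at h
  exact h.congr fun n => by ring

lemma tendsto_mul_falseAlarmFactor_pow (hW : ∀ x, IsDist (W x)) (hε : 0 < ε)
    (hw : Tendsto w atTop atTop) (hwn : Tendsto (fun n => w n ^ 2 / n) atTop (𝓝 0))
    (hp : ∀ k, Tendsto (fun n => n * activity (X n) k / w n) atTop (𝓝 (ρ k)))
    {k : Fin K} (hAC : AbsCont (W (xU {k})) (W (xU ∅))) {c t : ℝ} (hct : c - t + ρ k * ε < 0)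
    {m : ℕ → ℕ} (hm : ∀ n, (m n : ℝ) ≤ Real.exp (c * w n)) :
    Tendsto (fun n => m n / Real.exp (t * w n) * falseAlarmFactor W (X n) ε k ^ n) atTop (𝓝 0) := by
  obtain ⟨B, hB⟩ :=
    (Set.finite_range fun x => |∑ y, W x y * (W (xU {k}) y / W (xU ∅) y + ε)|).bddAbove
  refine tendsto_mul_pow_zero (b := fun _ => c - t) hw (fun n => by positivity)
    (fun n => ?_) (fun n => falseAlarmFactor_nonneg _ hW hε k)
    (fun n => falseAlarmFactor_le (X n) hW hAC hε.le fun x => hB ⟨x, rfl⟩) ?_ hct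
  · rw [div_le_iff₀ (Real.exp_pos _), ← Real.exp_add]
    exact (hm n).trans_eq (congrArg _ (by ring))
  have h := (((hp k).mul_const ε).add
    ((tendsto_mul_sum_activity_sq_div hw hwn hp).const_mul (5 * B))).const_add (c - t)
  rw [mul_zero, add_zero] at h
  exact h.congr fun n => by ring

end Decoding

end Asymptotics

section Achievability

variable {K : ℕ} {β : ℕ → Type*} [∀ n, Fintype (β n)] [∀ n, Nonempty (β n)]
  {X : ∀ n, Fin K → β n → Bool} {w : ℕ → ℝ} {ρ : Fin K → ℝ} {M : ℕ → Fin K → ℕ}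
  [∀ n k, NeZero (M n k)]

lemma exists_tendsto_Pe_codebookEnc {Y : Type*} [Fintype Y] {W : (Fin K → Bool) → Y → ℝ}
    (hW : ∀ x, IsDist (W x))
    (hAC : ∀ k, AbsCont (W (xU {k})) (W (xU ∅))) (hρ : ∀ k, 0 ≤ ρ k)
    (hw : Tendsto w atTop atTop) (hwn : Tendsto (fun n => w n ^ 2 / n) atTop (𝓝 0))
    (hp : ∀ k, Tendsto (fun n => n * activity (X n) k / w n) atTop (𝓝 (ρ k))) {c : Fin K → ℝ}
    (hM : ∀ n k, (M n k : ℝ) ≤ Real.exp (c k * w n))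
    (hc : ∀ k, (∀ n, M n k = 1) ∨ c k < ρ k * klDiv (W (xU {k})) (W (xU ∅))) :
    ∃ dec : ∀ n, (Fin n → Y) → (∀ k, Fin (codebookCount (β n) n (M n k))) → ∀ k, Fin (M n k),
      Tendsto (fun n => Pe W (M n) (fun k => codebookCount (β n) n (M n k)) (codebookEnc (X n))
        (dec n)) atTop (𝓝 0) := by
  let good k := c k < ρ k * klDiv (W (xU {k})) (W (xU ∅))
  have hchernoff k : ∃ ε t s, 0 < ε ∧ 0 ≤ s ∧ (good k → c k - t + ρ k * ε < 0 ∧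
      s * t + ρ k * (ratioMoment W ε k s (xU {k}) - 1) < 0) := by
    by_cases hk : good k
    · obtain ⟨t, hct, ht⟩ := exists_between hk
      obtain ⟨ε, hε, hρε⟩ := exists_pos_mul_lt (sub_pos.mpr hct) (ρ k)
      obtain ⟨s, hs, hst⟩ := exists_mul_add_mul_ratioMoment_neg hW (hAC k) hε (hρ k) ht
      exact ⟨ε, t, s, hε, hs, fun _ => ⟨by linarith, hst⟩⟩
    · exact ⟨1, 0, 0, one_pos, le_rfl, fun h => absurd h hk⟩
  choose ε t s hε hs hts using hchernoff
  let E n k : ℝ := Real.exp (t k * w n) ^ s k * missFactor W (X n) (ε k) k (s k) ^ n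
    + M n k / Real.exp (t k * w n) * falseAlarmFactor W (X n) (ε k) k ^ n
  have hE0 n k : 0 ≤ E n k :=
    add_nonneg (mul_nonneg (by positivity) (pow_nonneg (missFactor_nonneg _ hW (hε k) k _) n))
      (mul_nonneg (by positivity) (pow_nonneg (falseAlarmFactor_nonneg _ hW (hε k) k) n))
  have hE : Tendsto (fun n => ∑ k with good k, E n k) atTop (𝓝 (∑ k with good k, (0 + 0))) :=
    tendsto_finsetSum _ fun k hk => by
      obtain ⟨hct, hst⟩ := hts k (mem_filter_univ k |>.mp hk)
      exact (tendsto_rpow_mul_missFactor_pow hW (hε k) hw hwn hp hst).add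
        (tendsto_mul_falseAlarmFactor_pow hW (hε k) hw hwn hp (hAC k) hct fun n => hM n k)
  simp only [add_zero, sum_const_zero] at hE
  refine ⟨fun n y l => ratioDecode W (X n) ε (fun k => Real.exp (t k * w n)) y
    fun k => codebook (l k), squeeze_zero (fun n => Pe_nonneg _ hW _) (fun n => ?_) hE⟩
  refine (Pe_ratioDecode_le (X n) hW hε (fun k => Real.exp_pos _) hs).trans
    (sum_le_sum_of_subset_of_nonneg (fun k hk => ?_) fun k _ _ => hE0 n k)
  exact mem_filter_univ k |>.mpr ((hc k).resolve_left fun h => (mem_filter_univ k |>.mp hk) (h n))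

section Warden

variable {Z : Type*} [Fintype Z] {W : (Fin K → Bool) → Z → ℝ}

lemma tendsto_mul_deltaN_codebookEnc_div_sq (hW : ∀ x, IsDist (W x))
    (hAC : ∀ x, AbsCont (W x) (W (xU ∅))) (hw : Tendsto w atTop atTop)
    (hwn : Tendsto (fun n => w n ^ 2 / n) atTop (𝓝 0))
    (hp : ∀ k, Tendsto (fun n => n * activity (X n) k / w n) atTop (𝓝 (ρ k))) :
    Tendsto (fun n : ℕ => n * deltaN W (M n) (fun k => codebookCount (β n) n (M n k))
      (codebookEnc (X n)) / w n ^ 2) atTop (𝓝 (chiRho W ρ / 2)) := by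
  have hs : Tendsto (fun n => w n / n) atTop (𝓝 0) := by
    refine squeeze_zero' ?_ ?_ hwn <;> filter_upwards [hw.eventually_ge_atTop 1] with n hn
    · positivity
    · gcongr
      nlinarith
  have hs0 : ∀ᶠ n : ℕ in atTop, w n / n ≠ 0 := by
    filter_upwards [hw.eventually_gt_atTop 0, eventually_gt_atTop 0] with n hw0 hn0
    exact div_ne_zero hw0.ne' (Nat.cast_ne_zero.mpr hn0.ne')
  have h := tendsto_klDiv_div_sq_chiRho (W := W) (R := fun n => outputLaw W (X n))
    (p := fun n => activity (X n)) (s := fun n => w n / n)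
    (e := fun n => 4 * (∑ k, activity (X n) k) ^ 2) (hW _)
    (fun n => IsDist.outputLaw _ hW) (fun n => AbsCont.expect fun _ => hAC _) hs hs0
    (fun k => (hp k).congr fun n => by rw [div_div_eq_mul_div, mul_comm]) ?_
    fun n => abs_outputLaw_sub_additive_le (X n) hW
  · refine h.congr fun n => ?_
    rw [deltaN_codebookEnc _ hW hAC]
    field
  · have hμ := (tendsto_mul_sum_activity_sq_div hw hwn hp).const_mul 4
    rw [mul_zero] at hμ
    exact hμ.congr fun n => by field

lemma tendsto_deltaN_codebookEnc (hW : ∀ x, IsDist (W x))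
    (hAC : ∀ x, AbsCont (W x) (W (xU ∅))) (hw : Tendsto w atTop atTop)
    (hwn : Tendsto (fun n => w n ^ 2 / n) atTop (𝓝 0))
    (hp : ∀ k, Tendsto (fun n => n * activity (X n) k / w n) atTop (𝓝 (ρ k))) :
    Tendsto (fun n : ℕ => deltaN W (M n) (fun k => codebookCount (β n) n (M n k))
      (codebookEnc (X n))) atTop (𝓝 0) := by
  have h := (tendsto_mul_deltaN_codebookEnc_div_sq (M := M) hW hAC hw hwn hp).mul hwn
  rw [mul_zero] at h
  refine h.congr' ?_
  filter_upwards [hw.eventually_gt_atTop 0, eventually_gt_atTop 0] with n hw0 hn0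
  have : (0 : ℝ) < n := by exact_mod_cast hn0
  field

lemma tendsto_log_div_sqrt_mul_deltaN_codebookEnc (hW : ∀ x, IsDist (W x))
    (hAC : ∀ x, AbsCont (W x) (W (xU ∅))) (hχ : 0 < chiRho W ρ) (hw : Tendsto w atTop atTop)
    (hwn : Tendsto (fun n => w n ^ 2 / n) atTop (𝓝 0))
    (hp : ∀ k, Tendsto (fun n => n * activity (X n) k / w n) atTop (𝓝 (ρ k))) {k : Fin K} {c : ℝ}
    (hM : Tendsto (fun n => Real.log (M n k) / w n) atTop (𝓝 c)) :
    Tendsto (fun n : ℕ => Real.log (M n k) / √(n * deltaN W (M n)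
      (fun k => codebookCount (β n) n (M n k)) (codebookEnc (X n)))) atTop
      (𝓝 (√(2 / chiRho W ρ) * c)) := by
  have hsqrt := (tendsto_mul_deltaN_codebookEnc_div_sq (M := M) hW hAC hw hwn hp).sqrt
  have h := hM.div hsqrt (Real.sqrt_pos.mpr (half_pos hχ)).ne'
  have hlim : c / √(chiRho W ρ / 2) = √(2 / chiRho W ρ) * c := by
    rw [← inv_div 2, Real.sqrt_inv, div_inv_eq_mul, mul_comm]
  rw [← hlim]
  refine h.congr' ?_
  filter_upwards [hw.eventually_gt_atTop 0] with n hw0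
  rw [Pi.div_apply, Real.sqrt_div' _ (sq_nonneg _), Real.sqrt_sq hw0.le,
    div_div_div_cancel_right₀ hw0.ne']

end Warden

end Achievability

section Main

variable {K : ℕ} {Y Z : Type*} [Fintype Y] [Fintype Z]

/-- `r` is an achievable covert throughput tuple: some sequence of codes has vanishing error
probability and vanishing divergence at the warden, and its message sizes grow at the rates `r`. -/
def CovertAchievable (Wy : (Fin K → Bool) → Y → ℝ) (Wz : (Fin K → Bool) → Z → ℝ)
    (r : Fin K → ℝ) : Prop :=
  ∃ (M L : ℕ → Fin K → ℕ)
    (enc : ∀ n (k : Fin K), Fin (M n k) × Fin (L n k) → Fin n → Bool)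
    (dec : ∀ n, (Fin n → Y) → (∀ k, Fin (L n k)) → ∀ k, Fin (M n k)),
    (∀ n k, 0 < M n k) ∧ (∀ n k, 0 < L n k) ∧
    Tendsto (fun n => Pe Wy (M n) (L n) (enc n) (dec n)) atTop (𝓝 0) ∧
    Tendsto (fun n => deltaN Wz (M n) (L n) (enc n)) atTop (𝓝 0) ∧
    ∀ k, Tendsto (fun n => Real.log (M n k : ℝ) /
        Real.sqrt ((n : ℝ) * deltaN Wz (M n) (L n) (enc n))) atTop (𝓝 (r k))

lemma activity_decide_lt {N : ℕ} {a : Fin K → ℕ} {k : Fin K} (ha : a k ≤ N) :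
    activity (fun k (i : Fin N) => decide ((i : ℕ) < a k)) k = a k / N := by
  simp only [activity, decide_eq_true_eq, Fintype.expect_eq_sum_div_card, sum_boole,
    Fintype.card_fin]
  rw [Fin.card_filter_val_lt, min_eq_right ha]

lemma tendsto_mul_activity_div {w : ℕ → ℝ} {ρ : Fin K → ℝ} {k : Fin K} (hρ0 : 0 ≤ ρ k)
    (hρ1 : ρ k ≤ 1) (hw : Tendsto w atTop atTop) (hw0 : ∀ n, 0 ≤ w n) (hwn : ∀ n, w n ≤ n + 1) :
    Tendsto (fun n => n * activity
      (fun k (i : Fin (n + 1)) => decide ((i : ℕ) < ⌊ρ k * w n⌋₊)) k / w n) atTop (𝓝 (ρ k)) := by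
  have hfloor n : ⌊ρ k * w n⌋₊ ≤ n + 1 := by
    refine Nat.floor_le_of_le ((mul_le_of_le_one_left (hw0 n) hρ1).trans ?_)
    exact_mod_cast hwn n
  have h := (tendsto_natCast_div_add_atTop (1 : ℝ)).mul
    ((tendsto_nat_floor_mul_div_atTop hρ0).comp hw)
  rw [one_mul] at h
  refine h.congr fun n => ?_
  rw [activity_decide_lt (a := fun k => ⌊ρ k * w n⌋₊) (hfloor n), Function.comp_apply]
  push_cast
  field

variable {Wy : (Fin K → Bool) → Y → ℝ} {Wz : (Fin K → Bool) → Z → ℝ}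

theorem covertAchievable_of_lt (hWy : ∀ x, IsDist (Wy x)) (hWz : ∀ x, IsDist (Wz x))
    (hACy : ∀ k, AbsCont (Wy (xU {k})) (Wy (xU ∅)))
    (hACz : ∀ x, AbsCont (Wz x) (Wz (xU ∅))) {ρ c : Fin K → ℝ}
    (hρ : ∀ k, ρ k ∈ Set.Icc 0 1) (hχ : 0 < chiRho Wz ρ) (hc0 : ∀ k, 0 ≤ c k)
    (hc : ∀ k, c k = 0 ∨ c k < ρ k * klDiv (Wy (xU {k})) (Wy (xU ∅))) :
    CovertAchievable Wy Wz fun k => √(2 / chiRho Wz ρ) * c k := by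
  let w (n : ℕ) : ℝ := √√n
  have hw : Tendsto w atTop atTop :=
    Real.tendsto_sqrt_atTop.comp (Real.tendsto_sqrt_atTop.comp tendsto_natCast_atTop_atTop)
  have hw0 n : 0 ≤ w n := Real.sqrt_nonneg _
  have hwn : Tendsto (fun n => w n ^ 2 / n) atTop (𝓝 0) := by
    have h := tendsto_inv_atTop_zero.comp
      (Real.tendsto_sqrt_atTop.comp tendsto_natCast_atTop_atTop : Tendsto (fun n : ℕ => √n) _ _)
    refine h.congr fun n => ?_
    rw [Real.sq_sqrt (Real.sqrt_nonneg _), Real.sqrt_div_self']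
    simp
  have hwle n : w n ≤ n + 1 := by
    have h1 : (1 : ℝ) ≤ n + 1 := le_add_of_nonneg_left n.cast_nonneg
    refine Real.sqrt_le_iff.mpr ⟨by positivity, Real.sqrt_le_iff.mpr ⟨by positivity, ?_⟩⟩
    linarith [le_self_pow₀ h1 two_ne_zero, le_self_pow₀ (one_le_pow₀ h1 (n := 2)) two_ne_zero]
  let X (n : ℕ) (k : Fin K) (i : Fin (n + 1)) : Bool := decide ((i : ℕ) < ⌊ρ k * w n⌋₊)
  let M (n : ℕ) (k : Fin K) : ℕ := ⌊Real.exp (c k * w n)⌋₊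
  have hM n k : NeZero (M n k) :=
    ⟨(Nat.floor_pos.mpr (Real.one_le_exp (mul_nonneg (hc0 k) (hw0 n)))).ne'⟩
  have hp k : Tendsto (fun n => n * activity (X n) k / w n) atTop (𝓝 (ρ k)) :=
    tendsto_mul_activity_div (hρ k).1 (hρ k).2 hw hw0 hwle
  obtain ⟨dec, hPe⟩ := exists_tendsto_Pe_codebookEnc (X := X) (M := M) hWy hACy (fun k => (hρ k).1)
    hw hwn hp (fun n k => Nat.floor_le (Real.exp_pos _).le)
    fun k => (hc k).imp_left fun h n => by simp [M, h]
  exact ⟨M, fun n k => codebookCount (Fin (n + 1)) n (M n k), fun n => codebookEnc (X n), dec,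
    fun n k => (hM n k).pos, fun n k => codebookCount_pos _, hPe,
    tendsto_deltaN_codebookEnc hWz hACz hw hwn hp, fun k =>
    tendsto_log_div_sqrt_mul_deltaN_codebookEnc hWz hACz hχ hw hwn hp
      (tendsto_log_floor_exp_div hw (hc0 k))⟩

lemma covertRegion_subset_closure (hWy : ∀ x, IsDist (Wy x)) (hWz : ∀ x, IsDist (Wz x))
    (hACy : ∀ k, AbsCont (Wy (xU {k})) (Wy (xU ∅))) (hACz : ∀ x, AbsCont (Wz x) (Wz (xU ∅)))
    (hχ : ∀ ρ ∈ stdSimplex ℝ (Fin K), 0 < chiRho Wz ρ) :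
    covertRegion Wy Wz ⊆ closure {r | CovertAchievable Wy Wz r} := by
  intro r hr
  obtain ⟨ρ, hρ, hr⟩ := mem_covertRegion_iff.mp hr
  have hscale : 0 < √(2 / chiRho Wz ρ) := Real.sqrt_pos.mpr (div_pos two_pos (hχ ρ hρ))
  have hlim : Tendsto (fun t : ℝ => t • r) (𝓝[<] 1) (𝓝 r) := by
    have h : Tendsto (fun t : ℝ => t • r) (𝓝 1) (𝓝 ((1 : ℝ) • r)) :=
      tendsto_id.smul_const r
    rw [one_smul] at h
    exact h.mono_left nhdsWithin_le_nhds
  refine mem_closure_of_tendsto hlim ?_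
  filter_upwards [Ioo_mem_nhdsLT one_pos] with t ⟨ht0, ht1⟩
  have hach := covertAchievable_of_lt (c := fun k => t * r k / √(2 / chiRho Wz ρ)) hWy hWz hACy
    hACz (fun k => mem_Icc_of_mem_stdSimplex hρ k) (hχ ρ hρ)
    (fun k => div_nonneg (mul_nonneg ht0.le (hr k).1) hscale.le) fun k => ?_
  · change CovertAchievable Wy Wz fun k => t * r k
    simpa only [mul_div_cancel₀ _ hscale.ne'] using hach
  rcases (hr k).1.eq_or_lt with h0 | hpos
  · left
    simp only [← h0, mul_zero, zero_div]
  · right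
    rw [div_lt_iff₀' hscale]
    exact (mul_lt_of_lt_one_left hpos ht1).trans_le (hr k).2

lemma CovertAchievable.mem_covertRegion [NeZero K] {r : Fin K → ℝ}
    (hr : CovertAchievable Wy Wz r) (hWy : ∀ x, IsDist (Wy x)) (hWz : ∀ x, IsDist (Wz x))
    (hACy : ∀ k, AbsCont (Wy (xU {k})) (Wy (xU ∅))) (hACz : ∀ x, AbsCont (Wz x) (Wz (xU ∅)))
    (hNC : ¬ IsMixtureOfOthers (fun U : Finset (Fin K) => Wz (xU U)) ∅) :
    r ∈ covertRegion Wy Wz := by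
  obtain ⟨M, L, enc, dec, hM, hL, hPe, hδ, hrate⟩ := hr
  have (n : ℕ) (k : Fin K) : NeZero (M n k) := ⟨(hM n k).ne'⟩
  have (n : ℕ) (k : Fin K) : NeZero (L n k) := ⟨(hL n k).ne'⟩
  have hshift : Tendsto (fun n => n + 1) (Ultrafilter.of (atTop : Filter ℕ)) atTop :=
    (tendsto_add_atTop_nat 1).mono_left (Ultrafilter.of_le _)
  exact mem_covertRegion_of_tendsto (enc := fun n => enc (n + 1)) hWy hWz hACy hACz hNC
    (hPe.comp hshift) (hδ.comp hshift) fun k => (hrate k).comp hshift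

theorem covert_capacity_region_general [NeZero K] (hWy : ∀ x, IsDist (Wy x))
    (hWz : ∀ x, IsDist (Wz x)) (hACy : ∀ k, AbsCont (Wy (xU {k})) (Wy (xU ∅)))
    (hACz : ∀ U : Finset (Fin K), U.Nonempty → AbsCont (Wz (xU U)) (Wz (xU ∅)))
    (hNC : ¬ IsMixtureOfOthers (fun U : Finset (Fin K) => Wz (xU U)) ∅) :
    closure {r | CovertAchievable Wy Wz r} = covertRegion Wy Wz := by
  have hACz' := AbsCont.of_activeUsers hACz
  have hχ (ρ : Fin K → ℝ) (hρ : ρ ∈ stdSimplex ℝ (Fin K)) : 0 < chiRho Wz ρ :=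
    chiRho_pos hWz hACz' hNC hρ
  exact (closure_minimal (fun r hr => hr.mem_covertRegion hWy hWz hACy hACz' hNC)
    (isClosed_covertRegion hχ)).antisymm (covertRegion_subset_closure hWy hWz hACy hACz' hχ)

end Main

/-- the covert capacity region of the `K`-user binary-input MAC: the closure of
the set of achievable covert throughput tuples equals the union over `ρ` in the simplex of
the boxes `{r : 0 ≤ r_k ≤ √(2/χ(ρ)) ρ_k D(P_k‖P_∅)}`. -/
theorem covert_capacity_region (K : ℕ) (hK : 2 ≤ K)
    {Y Z : Type} [Fintype Y] [Fintype Z]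
    (Wy : (Fin K → Bool) → Y → ℝ) (Wz : (Fin K → Bool) → Z → ℝ)
    (hWy : ∀ x, IsDist (Wy x)) (hWz : ∀ x, IsDist (Wz x))
    (hACz : ∀ U : Finset (Fin K), U.Nonempty → AbsCont (Wz (xU U)) (Wz (xU ∅)))
    (hNC : ¬ ∃ lam : Finset (Fin K) → ℝ, (∀ T, 0 ≤ lam T) ∧ lam ∅ = 0 ∧
      (∑ T : Finset (Fin K), lam T) = 1 ∧
      ∀ z, Wz (xU (∅ : Finset (Fin K))) z = ∑ T : Finset (Fin K), lam T * Wz (xU T) z)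
    (hACy : ∀ U : Finset (Fin K), U.Nonempty → ∀ k ∈ U,
      AbsCont (Wy (xU U)) (Wy (xU {k})) ∧ AbsCont (Wy (xU {k})) (Wy (xU ∅))) :
    closure {r : Fin K → ℝ |
      ∃ (M L : ℕ → Fin K → ℕ)
        (enc : ∀ n (k : Fin K), Fin (M n k) × Fin (L n k) → Fin n → Bool)
        (dec : ∀ n, (Fin n → Y) → (∀ k, Fin (L n k)) → ∀ k, Fin (M n k)),
        (∀ n k, 0 < M n k) ∧ (∀ n k, 0 < L n k) ∧
        Tendsto (fun n => Pe Wy (M n) (L n) (enc n) (dec n)) atTop (𝓝 0) ∧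
        Tendsto (fun n => deltaN Wz (M n) (L n) (enc n)) atTop (𝓝 0) ∧
        ∀ k, Tendsto (fun n => Real.log (M n k : ℝ) /
            Real.sqrt ((n : ℝ) * deltaN Wz (M n) (L n) (enc n))) atTop (𝓝 (r k))} =
    {r : Fin K → ℝ | ∃ ρ : Fin K → ℝ, (∀ k, ρ k ∈ Set.Icc (0 : ℝ) 1) ∧ (∑ k, ρ k) = 1 ∧
      ∀ k, 0 ≤ r k ∧ r k ≤ Real.sqrt (2 / chiRho Wz ρ) *
        (ρ k * klDiv (Wy (xU {k})) (Wy (xU ∅)))} := by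
  have : NeZero K := ⟨(two_pos.trans_le hK).ne'⟩
  exact covert_capacity_region_general hWy hWz
    (fun k => (hACy {k} (singleton_nonempty k) k (mem_singleton_self k)).2) hACz hNC
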